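/- Let M be a σ-compact metric space with a good covering 𝒰 = {U_j}_{j∈J} (J countable), and fix L > 6. Then there exists a locally Lipschitz strong deformation retraction of the mapping cylinder M(p) onto D(𝒰) × {0} = {(θ,[x,0]) : (θ,x) ∈ D(𝒰)}, i.e. a locally Lipschitz map Φ : M(p) × [0,1] → M(p) with Φ(z,0) = z and Φ(z,1) ∈ D(𝒰) × {0} for all z ∈ M(p), and Φ(a,t) = a for all a ∈ D(𝒰) × {0} and t ∈ [0,1]. -/

import Mathlib

open Metric Set

/-- The cone distance on `M × [0,L]` (representatives of the cone
`K(M) = M × [0,L] / (M × {L})`). Two representatives are identified in the cone iff their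
cone distance is `0`. -/
noncomputable def coneDist {M : Type*} [PseudoMetricSpace M] (L : ℝ) (c c' : M × ℝ) : ℝ :=
  Real.sqrt ((L - c.2) ^ 2 + (L - c'.2) ^ 2 -
    2 * (L - c.2) * (L - c'.2) * Real.cos (min Real.pi (dist c.1 c'.1)))

/-- A subset `V` of a metric space admits a *Lipschitz strong deformation retraction to a
point*. -/
def IsLipSDRToPoint {X : Type*} [MetricSpace X] (V : Set X) : Prop :=
  ∃ (p : V) (F : V × unitInterval → V) (K : NNReal),
    LipschitzWith K F ∧ (∀ x, F (x, 0) = x) ∧ (∀ x, F (x, 1) = p) ∧ (∀ t, F (p, t) = p)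

/-- A locally finite open covering is *good*. -/
def IsGoodCovering {X : Type*} [MetricSpace X] {J : Type*} (U : J → Set X) : Prop :=
  (∀ j, IsOpen (U j)) ∧ (⋃ j, U j) = univ ∧ LocallyFinite U ∧
    (∀ j, IsCompact (closure (U j))) ∧
    ∀ s : Finset J, s.Nonempty → (⋂ j ∈ s, U j).Nonempty → IsLipSDRToPoint (⋂ j ∈ s, U j)

/-- The geometric realization of the nerve of a covering with countable index set,
realized inside `ℓ^∞(J)` (so that the induced metric is the sup metric). -/
noncomputable def NerveSetInf {M : Type*} [MetricSpace M] {J : Type*} (U : J → Set M) :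
    Set (lp (fun _ : J => ℝ) ⊤) :=
  {θ | (∀ j, θ j ∈ Icc (0:ℝ) 1) ∧ (Function.support fun j => θ j).Finite ∧
    (∑ᶠ j, θ j) = 1 ∧ (⋂ j ∈ Function.support fun j => θ j, U j).Nonempty}

/-- The distance of the mapping cylinder `M(p) ⊆ |𝒩_𝒰| × K(M)`:
`d((θ,c),(θ',c'))² = d(θ,θ')² + d_K(c,c')²`, on representatives `(θ, x, t)`. -/
noncomputable def cylDistInf {M : Type*} [PseudoMetricSpace M] {J : Type*} (L : ℝ)
    (z w : (lp (fun _ : J => ℝ) ⊤) × M × ℝ) : ℝ :=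
  Real.sqrt (dist z.1 w.1 ^ 2 + coneDist L z.2 w.2 ^ 2)

/-- `(θ, x, t)` represents a point of the mapping cylinder
`M(p) = ⋃_σ σ × K(U_σ) ⊆ |𝒩_𝒰| × K(M)`. -/
def InCylInf {M : Type*} [MetricSpace M] {J : Type*} (U : J → Set M) (L : ℝ)
    (z : (lp (fun _ : J => ℝ) ⊤) × M × ℝ) : Prop :=
  z.1 ∈ NerveSetInf U ∧ z.2.2 ∈ Icc 0 L ∧
    ∃ s : Finset J, (∀ j, z.1 j ≠ 0 → j ∈ s) ∧ (⋂ j ∈ s, U j).Nonempty ∧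
      (z.2.2 = L ∨ z.2.1 ∈ ⋂ j ∈ s, U j)

/-- `(θ, x, t)` represents a point of `D(𝒰) × {0} ⊆ M(p)`. -/
def InDZeroInf {M : Type*} [MetricSpace M] {J : Type*} (U : J → Set M)
    (z : (lp (fun _ : J => ℝ) ⊤) × M × ℝ) : Prop :=
  z.1 ∈ NerveSetInf U ∧ z.2.2 = 0 ∧
    z.2.1 ∈ ⋂ j ∈ Function.support fun j => z.1 j, U j

section Helpers
open scoped Topology NNReal

/-- Pointwise local Lipschitz continuity. -/
def LLAt {X Y : Type*} [PseudoMetricSpace X] [PseudoMetricSpace Y] (f : X → Y) (x : X) : Prop :=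
  ∃ K : ℝ≥0, ∃ t ∈ 𝓝 x, LipschitzOnWith K f t

namespace LLAt
variable {X Y Z : Type*} [PseudoMetricSpace X] [PseudoMetricSpace Y] [PseudoMetricSpace Z]

theorem continuousAt {f : X → Y} {x : X} (hf : LLAt f x) : ContinuousAt f x := by
  obtain ⟨K, t, ht, h⟩ := hf
  exact h.continuousOn.continuousAt ht

theorem of_lipschitz {K : ℝ≥0} {f : X → Y} (hf : LipschitzWith K f) (x : X) : LLAt f x :=
  ⟨K, univ, Filter.univ_mem, hf.lipschitzOnWith⟩

theorem comp {g : Y → Z} {f : X → Y} {x : X} (hg : LLAt g (f x)) (hf : LLAt f x) :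
    LLAt (fun y => g (f y)) x := by
  have hc := hf.continuousAt
  obtain ⟨K, t, ht, h⟩ := hf
  obtain ⟨K', t', ht', h'⟩ := hg
  refine ⟨K' * K, t ∩ f ⁻¹' t', Filter.inter_mem ht (hc ht'), ?_⟩
  exact h'.comp (h.mono inter_subset_left) (fun y hy => hy.2)

theorem prodMk {g : X → Z} {f : X → Y} {x : X} (hf : LLAt f x) (hg : LLAt g x) :
    LLAt (fun y => (f y, g y)) x := by
  obtain ⟨K, t, ht, h⟩ := hf
  obtain ⟨K', t', ht', h'⟩ := hg
  exact ⟨max K K', t ∩ t', Filter.inter_mem ht ht',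
    (h.mono inter_subset_left).prodMk (h'.mono inter_subset_right)⟩

theorem congr {f g : X → Y} {x : X} (hf : LLAt f x) (h : ∀ᶠ y in 𝓝 x, g y = f y) :
    LLAt g x := by
  obtain ⟨K, t, ht, hl⟩ := hf
  refine ⟨K, t ∩ {y | g y = f y}, Filter.inter_mem ht h, ?_⟩
  intro a ha b hb
  rw [ha.2, hb.2]
  exact hl ha.1 hb.1

theorem const (c : Y) (x : X) : LLAt (fun _ : X => c) x := of_lipschitz (LipschitzWith.const c) x

theorem contDiff {E F : Type*} [NormedAddCommGroup E] [NormedSpace ℝ E] [NormedAddCommGroup F]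
    [NormedSpace ℝ F] {f : E → F} {x : E} (hf : ContDiffAt ℝ 1 f x) : LLAt f x :=
  hf.exists_lipschitzOnWith

theorem add {E : Type*} [NormedAddCommGroup E] [NormedSpace ℝ E] {f g : X → E} {x : X}
    (hf : LLAt f x) (hg : LLAt g x) : LLAt (fun y => f y + g y) x := by
  have : LLAt (fun p : E × E => p.1 + p.2) (f x, g x) := contDiff (by fun_prop)
  exact this.comp (f := fun y => (f y, g y)) (hf.prodMk hg)

theorem sub {f g : X → ℝ} {x : X}
    (hf : LLAt f x) (hg : LLAt g x) : LLAt (fun y => f y - g y) x := by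
  have : LLAt (fun p : ℝ × ℝ => p.1 - p.2) (f x, g x) := contDiff (by fun_prop)
  exact this.comp (f := fun y => (f y, g y)) (hf.prodMk hg)

theorem mul {f g : X → ℝ} {x : X}
    (hf : LLAt f x) (hg : LLAt g x) : LLAt (fun y => f y * g y) x := by
  have : LLAt (fun p : ℝ × ℝ => p.1 * p.2) (f x, g x) := contDiff (by fun_prop)
  exact this.comp (f := fun y => (f y, g y)) (hf.prodMk hg)

theorem smul_const {E : Type*} [NormedAddCommGroup E] [NormedSpace ℝ E] {f : X → ℝ} {x : X}
    (hf : LLAt f x) (v : E) : LLAt (fun y => f y • v) x := by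
  have : LLAt (fun p : ℝ => p • v) (f x) := contDiff (by fun_prop)
  exact this.comp hf

theorem div {f g : X → ℝ} {x : X}
    (hf : LLAt f x) (hg : LLAt g x) (h0 : g x ≠ 0) : LLAt (fun y => f y / g y) x := by
  have : LLAt (fun p : ℝ × ℝ => p.1 / p.2) (f x, g x) :=
    contDiff (ContDiffAt.div contDiffAt_fst contDiffAt_snd h0)
  exact this.comp (f := fun y => (f y, g y)) (hf.prodMk hg)

theorem sum {E : Type*} [NormedAddCommGroup E] [NormedSpace ℝ E] {ι : Type*} (s : Finset ι)
    {f : ι → X → E} {x : X}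
    (hf : ∀ i ∈ s, LLAt (f i) x) : LLAt (fun y => ∑ i ∈ s, f i y) x := by
  classical
  induction s using Finset.induction_on with
  | empty => simpa using const (0 : E) x
  | insert a s ha ih =>
    simp only [Finset.sum_insert ha]
    exact (hf a (by simp)).add (ih fun i hi => hf i (by simp [hi]))

theorem prod {ι : Type*} (s : Finset ι) {f : ι → X → ℝ} {x : X}
    (hf : ∀ i ∈ s, LLAt (f i) x) : LLAt (fun y => ∏ i ∈ s, f i y) x := by
  classical
  induction s using Finset.induction_on with
  | empty => simpa using const (1 : ℝ) x
  | insert a s ha ih =>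
    simp only [Finset.prod_insert ha]
    exact (hf a (by simp)).mul (ih fun i hi => hf i (by simp [hi]))

/-- metric form -/
theorem exists_ball {f : X → Y} {x : X} (hf : LLAt f x) :
    ∃ K : ℝ, 0 ≤ K ∧ ∀ᶠ p : X × X in 𝓝 (x, x), dist (f p.1) (f p.2) ≤ K * dist p.1 p.2 := by
  obtain ⟨K, t, ht, h⟩ := hf
  refine ⟨K, K.2, ?_⟩
  rw [nhds_prod_eq]
  filter_upwards [Filter.prod_mem_prod ht ht] with p hp
  exact h.dist_le_mul _ hp.1 _ hp.2

theorem of_eventually {f : X → Y} {x : X} (K : ℝ)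
    (h : ∀ᶠ p : X × X in 𝓝 (x, x), dist (f p.1) (f p.2) ≤ K * dist p.1 p.2) : LLAt f x := by
  rw [nhds_prod_eq] at h
  obtain ⟨t, ht, h⟩ := Filter.eventually_prod_self_iff
    (r := fun a b => dist (f a) (f b) ≤ K * dist a b).1 h
  refine ⟨K.toNNReal, t, ht, LipschitzOnWith.of_dist_le_mul fun a ha b hb => ?_⟩
  exact (h a ha b hb).trans
    (mul_le_mul_of_nonneg_right (Real.le_coe_toNNReal K) dist_nonneg)

end LLAt

/-- clamp to the unit interval -/
noncomputable def clampU (r : ℝ) : ℝ := max 0 (min 1 r)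

theorem clampU_nonneg (r : ℝ) : 0 ≤ clampU r := le_max_left _ _
theorem clampU_le_one (r : ℝ) : clampU r ≤ 1 := max_le zero_le_one (min_le_left _ _)
theorem clampU_of_one_le {r : ℝ} (h : 1 ≤ r) : clampU r = 1 := by simp [clampU, h]
theorem clampU_of_nonpos {r : ℝ} (h : r ≤ 0) : clampU r = 0 := by
  simp [clampU, h]
theorem pos_of_clampU_pos {r : ℝ} (h : 0 < clampU r) : 0 < r := by
  by_contra h'
  rw [clampU_of_nonpos (not_lt.1 h')] at h
  exact lt_irrefl _ h
theorem one_le_of_clampU {r : ℝ} (h : clampU r = 1) : 1 ≤ r := by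
  by_contra h'
  have : clampU r < 1 := max_lt zero_lt_one (min_lt_of_right_lt (not_le.1 h'))
  linarith
theorem clampU_lipschitz : LipschitzWith 1 clampU := by
  have := ((LipschitzWith.id (α := ℝ)).const_min 1).const_max 0
  exact this

theorem LLAt.clamp {X : Type*} [PseudoMetricSpace X] {f : X → ℝ} {x : X} (hf : LLAt f x) :
    LLAt (fun y => clampU (f y)) x :=
  (LLAt.of_lipschitz clampU_lipschitz (f x)).comp hf


/-- intersection over a finset -/
def Uint {M J : Type*} (U : J → Set M) (τ : Finset J) : Set M := ⋂ j ∈ τ, U j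

/-- family of contractions -/
structure Contr {M J : Type*} [MetricSpace M] (U : J → Set M)
    (F : Finset J → M → ℝ → M) (K : Finset J → ℝ) : Prop where
  maps : ∀ τ : Finset J, τ.Nonempty → ∀ x ∈ Uint U τ, ∀ a, F τ x a ∈ Uint U τ
  zero : ∀ τ : Finset J, τ.Nonempty → ∀ x ∈ Uint U τ, F τ x 0 = x
  one : ∀ τ : Finset J, τ.Nonempty → ∀ x ∈ Uint U τ, ∀ y ∈ Uint U τ, F τ x 1 = F τ y 1
  lip : ∀ τ : Finset J, τ.Nonempty → ∀ x ∈ Uint U τ, ∀ y ∈ Uint U τ, ∀ a b,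
    dist (F τ x a) (F τ y b) ≤ K τ * (dist x y + |a - b|)

theorem exists_contr {M J : Type*} [MetricSpace M] (U : J → Set M) (hU : IsGoodCovering U) :
    ∃ F K, Contr U F K := by
  classical
  have key : ∀ τ : Finset J, ∃ (F : M → ℝ → M) (K : ℝ), τ.Nonempty →
      (∀ x ∈ Uint U τ, ∀ a, F x a ∈ Uint U τ) ∧ (∀ x ∈ Uint U τ, F x 0 = x) ∧
      (∀ x ∈ Uint U τ, ∀ y ∈ Uint U τ, F x 1 = F y 1) ∧
      (∀ x ∈ Uint U τ, ∀ y ∈ Uint U τ, ∀ a b,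
        dist (F x a) (F y b) ≤ K * (dist x y + |a - b|)) := by
    intro τ
    by_cases hτ : τ.Nonempty ∧ (Uint U τ).Nonempty
    · obtain ⟨p, F, K, hF, h0, h1, -⟩ := hU.2.2.2.2 τ hτ.1 hτ.2
      refine ⟨fun x a => if hx : x ∈ Uint U τ then
        (F (⟨x, hx⟩, projIcc 0 1 zero_le_one a) : _).1 else x, K, fun _ => ⟨?_, ?_, ?_, ?_⟩⟩
      · intro x hx a
        simp only [hx, dite_true]
        exact (F (⟨x, hx⟩, projIcc 0 1 zero_le_one a)).2
      · intro x hx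
        simp only [hx, dite_true]
        rw [projIcc_left]
        exact congrArg Subtype.val (h0 ⟨x, hx⟩)
      · intro x hx y hy
        simp only [hx, hy, dite_true]
        rw [projIcc_right]
        exact congrArg Subtype.val ((h1 ⟨x, hx⟩).trans (h1 ⟨y, hy⟩).symm)
      · intro x hx y hy a b
        simp only [hx, hy, dite_true]
        refine (hF.dist_le_mul (⟨x, hx⟩, projIcc 0 1 zero_le_one a)
          (⟨y, hy⟩, projIcc 0 1 zero_le_one b)).trans ?_
        refine mul_le_mul_of_nonneg_left ?_ K.2
        rw [Prod.dist_eq]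
        have h2 : dist (projIcc (0:ℝ) 1 zero_le_one a) (projIcc 0 1 zero_le_one b) ≤ |a - b| := by
          have := (LipschitzWith.projIcc (zero_le_one (α := ℝ))).dist_le_mul a b
          simpa [Real.dist_eq] using this
        have h3 : dist (⟨x, hx⟩ : Uint U τ) ⟨y, hy⟩ = dist x y := rfl
        refine max_le ?_ ?_
        · have := abs_nonneg (a - b)
          exact h3.le.trans (by linarith)
        · have := dist_nonneg (x := x) (y := y)
          exact h2.trans (by linarith)
    · refine ⟨fun x _ => x, 0, fun h => ?_⟩
      have he : ∀ x, x ∉ Uint U τ := fun x hx => hτ ⟨h, x, hx⟩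
      exact ⟨fun x hx => (he x hx).elim, fun x hx => (he x hx).elim,
        fun x hx => (he x hx).elim, fun x hx => (he x hx).elim⟩
  choose F K h using key
  exact ⟨F, K, fun τ hτ => (h τ hτ).1, fun τ hτ => (h τ hτ).2.1, fun τ hτ => (h τ hτ).2.2.1,
    fun τ hτ => (h τ hτ).2.2.2⟩

section
variable {M J : Type*} [MetricSpace M]

open Classical in
/-- one level of the composite -/
noncomputable def lev (F : Finset J → M → ℝ → M) (a : Finset J → ℝ) (k : ℕ) (x : M) : M :=
  if h : ∃ τ : Finset J, τ.card = k ∧ 0 < a τ then F h.choose x (a h.choose) else x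

/-- the composite -/
noncomputable def compo (F : Finset J → M → ℝ → M) (a : Finset J → ℝ) : ℕ → M → M
  | 0, x => x
  | n + 1, x => compo F a n (lev F a (n + 1) x)

theorem lev_cases (F : Finset J → M → ℝ → M) (a : Finset J → ℝ) (k : ℕ) :
    (∃ τ : Finset J, τ.card = k ∧ 0 < a τ ∧ ∀ x, lev F a k x = F τ x (a τ)) ∨
    ((∀ τ : Finset J, τ.card = k → ¬ 0 < a τ) ∧ ∀ x, lev F a k x = x) := by
  classical
  by_cases h : ∃ τ : Finset J, τ.card = k ∧ 0 < a τ
  · left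
    refine ⟨h.choose, h.choose_spec.1, h.choose_spec.2, fun x => ?_⟩
    simp only [lev, dif_pos h]
  · right
    refine ⟨fun τ h1 h2 => h ⟨τ, h1, h2⟩, fun x => ?_⟩
    simp only [lev, dif_neg h]

theorem compo_stable (F : Finset J → M → ℝ → M) (a : Finset J → ℝ) (n : ℕ)
    (h : ∀ τ : Finset J, n < τ.card → ¬ 0 < a τ) (m : ℕ) (hm : n ≤ m) (x : M) :
    compo F a m x = compo F a n x := by
  induction m, hm using Nat.le_induction with
  | base => rfl
  | succ m hm ih =>
    rw [compo]
    rcases lev_cases F a (m + 1) with ⟨τ, h1, h2, -⟩ | ⟨-, h2⟩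
    · exact (h τ (by omega) h2).elim
    · rw [h2, ih]

theorem compo_zero (F : Finset J → M → ℝ → M) (a : Finset J → ℝ)
    (h : ∀ τ : Finset J, ¬ 0 < a τ) (n : ℕ) (x : M) : compo F a n x = x := by
  simpa [compo] using compo_stable F a 0 (fun τ _ => h τ) n (Nat.zero_le _) x

/-- nested amounts -/
def Nested (a : Finset J → ℝ) : Prop :=
  (∀ τ, 0 < a τ → τ.Nonempty) ∧
  ∀ τ τ', 0 < a τ → 0 < a τ' → τ'.card ≤ τ.card → τ' ⊆ τ

def InvN (U : J → Set M) (a : Finset J → ℝ) (n : ℕ) (x : M) : Prop :=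
  ∀ τ, τ.card ≤ n → 0 < a τ → x ∈ Uint U τ

theorem Uint_anti (U : J → Set M) {τ τ' : Finset J} (h : τ' ⊆ τ) : Uint U τ ⊆ Uint U τ' :=
  fun _ hx => mem_iInter₂.2 fun j hj => mem_iInter₂.1 hx j (h hj)

theorem InvN.lev {U : J → Set M} {F : Finset J → M → ℝ → M} {K : Finset J → ℝ}
    (hF : Contr U F K) {a : Finset J → ℝ} (ha : Nested a) {n : ℕ} {x : M}
    (hx : InvN U a (n + 1) x) : InvN U a n (lev F a (n + 1) x) := by
  intro τ' h' ha'
  rcases lev_cases F a (n + 1) with ⟨τ, h1, h2, h3⟩ | ⟨-, h2⟩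
  · rw [h3]
    exact Uint_anti U (ha.2 τ τ' h2 ha' (by omega))
      (hF.maps τ (ha.1 τ h2) x (hx τ h1.le h2) _)
  · rw [h2]; exact hx τ' (by omega) ha'

/-- the composite stays in each set of the family -/
theorem compo_mem {U : J → Set M} {F : Finset J → M → ℝ → M} {K : Finset J → ℝ}
    (hF : Contr U F K) {a : Finset J → ℝ} (ha : Nested a) (S : Set J)
    (hS : ∀ τ, 0 < a τ → S ⊆ ↑τ) (n : ℕ) :
    ∀ x, InvN U a n x → (∀ j ∈ S, x ∈ U j) → ∀ j ∈ S, compo F a n x ∈ U j := by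
  induction n with
  | zero => intro x _ h; exact h
  | succ n ih =>
    intro x hx h
    rw [compo]
    refine ih _ (hx.lev hF ha) ?_
    rcases lev_cases F a (n + 1) with ⟨τ, h1, h2, h3⟩ | ⟨-, h2⟩
    · rw [h3]
      intro j hj
      exact mem_iInter₂.1 (hF.maps τ (ha.1 τ h2) x (hx τ h1.le h2) _) j (hS τ h2 hj)
    · rw [h2]; exact h

theorem lev_dist {U : J → Set M} {F : Finset J → M → ℝ → M} {K : Finset J → ℝ}
    (hF : Contr U F K) {a b : Finset J → ℝ} (ha : Nested a) (hb : Nested b)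
    (ha0 : ∀ τ, 0 ≤ a τ) (hb0 : ∀ τ, 0 ≤ b τ)
    {A e : ℝ} (hA : 1 ≤ A) (he0 : 0 ≤ e) (he1 : e < 1)
    (hKa : ∀ τ, 0 < a τ → K τ ≤ A) (hKb : ∀ τ, 0 < b τ → K τ ≤ A)
    (hab : ∀ τ, |a τ - b τ| ≤ e)
    (hc : ∀ τ τ', 0 < a τ → 0 < b τ' → τ.card = τ'.card → τ = τ')
    {n : ℕ} {x y : M} (hx : InvN U a (n + 1) x) (hy : InvN U b (n + 1) y) :
    dist (lev F a (n + 1) x) (lev F b (n + 1) y) ≤ A * (dist x y + e) ∧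
    ((∃ τ : Finset J, τ.card = n + 1 ∧ (a τ = 1 ∨ b τ = 1)) →
      dist (lev F a (n + 1) x) (lev F b (n + 1) y) ≤ A * e) := by
  have hd := dist_nonneg (x := x) (y := y)
  rcases lev_cases F a (n + 1) with ⟨τ, h1, h2, h3⟩ | ⟨h1, h2⟩ <;>
  rcases lev_cases F b (n + 1) with ⟨τ', h1', h2', h3'⟩ | ⟨h1', h2'⟩
  · obtain rfl := hc τ τ' h2 h2' (by omega)
    rw [h3, h3']
    have hτ := ha.1 τ h2
    have hxx := hx τ h1.le h2
    have hyy := hy τ h1.le h2'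
    have hl := hF.lip τ hτ
    refine ⟨(hl x hxx y hyy _ _).trans ?_, ?_⟩
    · have := abs_nonneg (a τ - b τ)
      exact mul_le_mul (hKa τ h2) (by linarith [hab τ]) (by linarith) (by linarith)
    · rintro ⟨σ, hσ, h⟩
      have hA' : K τ * (0 + |a τ - b τ|) ≤ A * e :=
        mul_le_mul (hKa τ h2) (by linarith [hab τ]) (by simp) (by linarith)
      rcases h with h | h
      · have : σ = τ := by
          have h5 : 0 < a σ := by rw [h]; exact one_pos
          exact Finset.eq_of_subset_of_card_le (ha.2 τ σ h2 h5 (by omega)) (by omega)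
        subst this
        rw [h] at hA' ⊢
        rw [hF.one σ hτ x hxx y hyy]
        have := hl y hyy y hyy 1 (b σ)
        rw [dist_self] at this
        exact this.trans hA'
      · have : σ = τ := by
          have h5 : 0 < b σ := by rw [h]; exact one_pos
          exact Finset.eq_of_subset_of_card_le (hb.2 τ σ h2' h5 (by omega)) (by omega)
        subst this
        rw [h] at hA' ⊢
        rw [hF.one σ hτ y hyy x hxx]
        have := hl x hxx x hxx (a σ) 1
        rw [dist_self] at this
        exact this.trans hA'
  · rw [h3, h2']
    have hτ := ha.1 τ h2
    have hxx := hx τ h1.le h2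
    have hb' : b τ = 0 := le_antisymm (not_lt.1 (h1' τ h1)) (hb0 τ)
    have hl := hF.lip τ hτ x hxx x hxx (a τ) 0
    rw [hF.zero τ hτ x hxx, dist_self, zero_add] at hl
    have h6 : |a τ - 0| ≤ e := by rw [← hb']; exact hab τ
    have h7 : K τ * |a τ - 0| ≤ A * e :=
      mul_le_mul (hKa τ h2) h6 (abs_nonneg _) (by linarith)
    refine ⟨(dist_triangle _ x _).trans ?_, ?_⟩
    · nlinarith
    · rintro ⟨σ, hσ, h⟩
      exfalso
      have hb'' : b σ = 0 := le_antisymm (not_lt.1 (h1' σ hσ)) (hb0 σ)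
      have := hab σ
      rcases h with h | h
      · rw [h, hb''] at this
        norm_num at this
        linarith
      · linarith
  · rw [h3', h2]
    have hτ := hb.1 τ' h2'
    have hxx := hy τ' h1'.le h2'
    have hb' : a τ' = 0 := le_antisymm (not_lt.1 (h1 τ' h1')) (ha0 τ')
    have hl := hF.lip τ' hτ y hxx y hxx 0 (b τ')
    rw [hF.zero τ' hτ y hxx, dist_self, zero_add] at hl
    have h6 : |0 - b τ'| ≤ e := by rw [← hb']; exact hab τ'
    have h7 : K τ' * |0 - b τ'| ≤ A * e :=
      mul_le_mul (hKb τ' h2') h6 (abs_nonneg _) (by linarith)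
    refine ⟨(dist_triangle _ y _).trans ?_, ?_⟩
    · nlinarith
    · rintro ⟨σ, hσ, h⟩
      exfalso
      have hb'' : a σ = 0 := le_antisymm (not_lt.1 (h1 σ hσ)) (ha0 σ)
      have := hab σ
      rcases h with h | h
      · linarith
      · rw [h, hb''] at this
        norm_num at this
        linarith
  · rw [h2, h2']
    refine ⟨by nlinarith, ?_⟩
    rintro ⟨σ, hσ, h | h⟩
    · exact (h1 σ hσ (by rw [h]; exact one_pos)).elim
    · exact (h1' σ hσ (by rw [h]; exact one_pos)).elim

theorem compo_dist {U : J → Set M} {F : Finset J → M → ℝ → M} {K : Finset J → ℝ}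
    (hF : Contr U F K) {a b : Finset J → ℝ} (ha : Nested a) (hb : Nested b)
    (ha0 : ∀ τ, 0 ≤ a τ) (hb0 : ∀ τ, 0 ≤ b τ)
    {A e : ℝ} (hA : 1 ≤ A) (he0 : 0 ≤ e) (he1 : e < 1)
    (hKa : ∀ τ, 0 < a τ → K τ ≤ A) (hKb : ∀ τ, 0 < b τ → K τ ≤ A)
    (hab : ∀ τ, |a τ - b τ| ≤ e)
    (hc : ∀ τ τ', 0 < a τ → 0 < b τ' → τ.card = τ'.card → τ = τ')
    (n : ℕ) : ∀ x y : M, InvN U a n x → InvN U b n y →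
    dist (compo F a n x) (compo F b n y) ≤ (2 * A) ^ n * (dist x y + e) ∧
    ((∃ τ : Finset J, τ.card ≤ n ∧ (a τ = 1 ∨ b τ = 1)) →
      dist (compo F a n x) (compo F b n y) ≤ (2 * A) ^ n * e) := by
  induction n with
  | zero =>
    intro x y _ _
    refine ⟨by simpa [compo] using he0, ?_⟩
    rintro ⟨τ, h1, h⟩
    exfalso
    have h2 : τ = ∅ := by simpa using h1
    rcases h with h | h
    · have := ha.1 τ (by rw [h]; exact one_pos)
      simp [h2] at this
    · have := hb.1 τ (by rw [h]; exact one_pos)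
      simp [h2] at this
  | succ n ih =>
    intro x y hx hy
    have hs := lev_dist hF ha hb ha0 hb0 hA he0 he1 hKa hKb hab hc hx hy
    have hi := ih _ _ (hx.lev hF ha) (hy.lev hF hb)
    have hd := dist_nonneg (x := x) (y := y)
    have hp : 0 ≤ (2 * A) ^ n := by positivity
    rw [compo, compo]
    refine ⟨hi.1.trans ?_, ?_⟩
    · rw [pow_succ, mul_assoc]
      refine mul_le_mul_of_nonneg_left ?_ hp
      nlinarith [hs.1]
    · rintro ⟨τ, h1, h⟩
      rcases Nat.lt_or_ge n τ.card with h3 | h3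
      · refine hi.1.trans ?_
        rw [pow_succ, mul_assoc]
        refine mul_le_mul_of_nonneg_left ?_ hp
        nlinarith [hs.2 ⟨τ, by omega, h⟩]
      · refine (hi.2 ⟨τ, h3, h⟩).trans ?_
        rw [pow_succ, mul_assoc]
        refine mul_le_mul_of_nonneg_left ?_ hp
        nlinarith
end


/-- bounded sequences -/
abbrev LInf (J : Type*) := lp (fun _ : J => ℝ) ⊤

section
variable {M J : Type*} [MetricSpace M]

/-- good representatives -/
def GoodRep (U : J → Set M) (L : ℝ) (z : LInf J × M × ℝ) : Prop :=
  z.1 ∈ NerveSetInf U ∧ z.2.2 ∈ Icc 0 L ∧ ∀ j, z.1 j ≠ 0 → z.2.1 ∈ U j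

/-- distance bi-Lipschitz to the cone distance -/
noncomputable def conD (L : ℝ) (c c' : M × ℝ) : ℝ :=
  |c.2 - c'.2| + min (L - c.2) (L - c'.2) * min 2 (dist c.1 c'.1)

theorem conD_comm (L : ℝ) (c c' : M × ℝ) : conD L c c' = conD L c' c := by
  unfold conD
  rw [abs_sub_comm, min_comm, dist_comm]

theorem conD_triangle {L : ℝ} {c c' c'' : M × ℝ} (h : c.2 ≤ L) (h' : c'.2 ≤ L) (h'' : c''.2 ≤ L) :
    conD L c c'' ≤ conD L c c' + conD L c' c'' := by
  unfold conD
  have ht := dist_triangle c.1 c'.1 c''.1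
  have d1 := dist_nonneg (x := c.1) (y := c'.1)
  have d2 := dist_nonneg (x := c'.1) (y := c''.1)
  have d3 := dist_nonneg (x := c.1) (y := c''.1)
  set a := L - c.2
  set b := L - c'.2
  set e := L - c''.2
  have e1 : c.2 - c''.2 = e - a := by ring
  have e2 : c.2 - c'.2 = b - a := by ring
  have e3 : c'.2 - c''.2 = e - b := by ring
  rw [e1, e2, e3]
  have ha : 0 ≤ a := sub_nonneg.2 h
  have hb : 0 ≤ b := sub_nonneg.2 h'
  have he : 0 ≤ e := sub_nonneg.2 h''
  set x := min 2 (dist c.1 c'.1)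
  set y := min 2 (dist c'.1 c''.1)
  set w := min 2 (dist c.1 c''.1) with hw
  have hx : 0 ≤ x := le_min (by norm_num) d1
  have hy : 0 ≤ y := le_min (by norm_num) d2
  have hw0 : 0 ≤ w := le_min (by norm_num) d3
  have hw2 : w ≤ 2 := min_le_left _ _
  have hwxy : w ≤ x + y := by
    rcases min_cases 2 (dist c.1 c'.1) with ⟨q, _⟩ | ⟨q, _⟩ <;>
    rcases min_cases 2 (dist c'.1 c''.1) with ⟨q', _⟩ | ⟨q', _⟩
    all_goals
      have : w ≤ dist c.1 c''.1 := min_le_right _ _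
      have : x = _ := q
      have : y = _ := q'
      linarith
  clear_value x y w a b e
  set m := min a e with hm
  have hm0 : 0 ≤ m := le_min ha he
  rcases le_total m b with hmb | hmb
  · have h1 : m ≤ min a b := le_min (min_le_left _ _) hmb
    have h2 : m ≤ min b e := le_min hmb (min_le_right _ _)
    have h3 : m * w ≤ min a b * x + min b e * y := by
      have := mul_le_mul_of_nonneg_left hwxy hm0
      have := mul_le_mul_of_nonneg_right h1 hx
      have := mul_le_mul_of_nonneg_right h2 hy
      linarith
    have := abs_sub_le e b a
    linarith
  · have hba : b ≤ a := hmb.trans (min_le_left _ _)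
    have hbe : b ≤ e := hmb.trans (min_le_right _ _)
    rw [min_eq_right hba, min_eq_left hbe, abs_of_nonpos (by linarith : b - a ≤ 0),
      abs_of_nonneg (by linarith : 0 ≤ e - b)]
    have h3 : m * w ≤ b * (x + y) + (m - b) * 2 := by
      have := mul_le_mul_of_nonneg_left hwxy hb
      have := mul_le_mul_of_nonneg_left hw2 (sub_nonneg.2 hmb)
      linarith
    have h4 : |e - a| + 2 * m = a + e := by
      rcases le_total a e with q | q
      · rw [hm, min_eq_left q, abs_of_nonneg (by linarith)]; ring
      · rw [hm, min_eq_right q, abs_of_nonpos (by linarith)]; ring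
    linarith

theorem conD_nonneg {L : ℝ} {c c' : M × ℝ} (h : c.2 ≤ L) (h' : c'.2 ≤ L) : 0 ≤ conD L c c' :=
  add_nonneg (abs_nonneg _) (mul_nonneg (le_min (by linarith) (by linarith))
    (le_min (by norm_num) dist_nonneg))

theorem coneDist_le {L : ℝ} {c c' : M × ℝ} (h : c.2 ≤ L) (h' : c'.2 ≤ L) :
    coneDist L c c' ≤ 4 * conD L c c' := by
  have hpi := Real.pi_le_four
  have hpi0 := Real.pi_pos
  have h0 := conD_nonneg h h'
  unfold coneDist
  apply Real.sqrt_le_iff.2 ⟨by linarith, ?_⟩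
  unfold conD
  have d1 := dist_nonneg (x := c.1) (y := c'.1)
  have e2 : |c.2 - c'.2| = |(L - c.2) - (L - c'.2)| := by rw [abs_sub_comm]; ring_nf
  rw [e2]
  have ha : 0 ≤ L - c.2 := sub_nonneg.2 h
  have hb : 0 ≤ L - c'.2 := sub_nonneg.2 h'
  generalize L - c.2 = a at *
  generalize L - c'.2 = b at *
  generalize dist c.1 c'.1 = d at *
  set m := min Real.pi d with hm
  set n := min 2 d with hn
  have hm0 : 0 ≤ m := le_min hpi0.le d1
  have hn0 : 0 ≤ n := le_min (by norm_num) d1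
  have hm4 : m ≤ 4 := (min_le_left _ _).trans hpi
  have hmn : m ≤ 2 * n := by
    rcases le_total 2 d with q | q
    · rw [hn, min_eq_left q]; linarith
    · rw [hn, min_eq_right q]; linarith [min_le_right Real.pi d]
  have hcos := Real.one_sub_sq_div_two_le_cos (x := m)
  clear_value m n
  have hab : 0 ≤ a * b := mul_nonneg ha hb
  have key : a ^ 2 + b ^ 2 - 2 * a * b * Real.cos m ≤ (a - b) ^ 2 + a * b * m ^ 2 := by
    nlinarith
  refine key.trans ?_
  have main : ∀ p q : ℝ, 0 ≤ p → p ≤ q →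
      (q - p) ^ 2 + p * q * m ^ 2 ≤ (4 * ((q - p) + p * n)) ^ 2 := by
    intro p q hp hpq
    have hr : 0 ≤ q - p := sub_nonneg.2 hpq
    obtain ⟨r, rfl⟩ : ∃ r, q = p + r := ⟨q - p, by ring⟩
    have hr : 0 ≤ r := by linarith
    have h1 : p * (p + r) * m ^ 2 ≤ p ^ 2 * (2 * n) ^ 2 + p * r * (4 * (2 * n)) := by
      have : p ^ 2 * m ^ 2 ≤ p ^ 2 * (2 * n) ^ 2 := by gcongr
      have : p * r * m ^ 2 ≤ p * r * (4 * (2 * n)) := by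
        rw [pow_two]; gcongr
      nlinarith
    have : 0 ≤ p * r * n := by positivity
    have : 0 ≤ p ^ 2 * n ^ 2 := by positivity
    nlinarith
  rcases le_total a b with q | q
  · rw [min_eq_left q, abs_of_nonpos (by linarith)]
    have := main a b ha q
    linarith
  · rw [min_eq_right q, abs_of_nonneg (by linarith)]
    have := main b a hb q
    linarith

theorem conD_le {L : ℝ} {c c' : M × ℝ} (h : c.2 ≤ L) (h' : c'.2 ≤ L) :
    conD L c c' ≤ 3 * coneDist L c c' := by
  have hpi := Real.pi_le_four
  have hpi3 := Real.pi_gt_three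
  have hpi0 := Real.pi_pos
  unfold coneDist conD
  have d1 := dist_nonneg (x := c.1) (y := c'.1)
  have e2 : |c.2 - c'.2| = |(L - c.2) - (L - c'.2)| := by rw [abs_sub_comm]; ring_nf
  rw [e2]
  have ha : 0 ≤ L - c.2 := sub_nonneg.2 h
  have hb : 0 ≤ L - c'.2 := sub_nonneg.2 h'
  generalize L - c.2 = a at *
  generalize L - c'.2 = b at *
  generalize dist c.1 c'.1 = d at *
  set m := min Real.pi d with hm
  set n := min 2 d with hn
  have hm0 : 0 ≤ m := le_min hpi0.le d1
  have hn0 : 0 ≤ n := le_min (by norm_num) d1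
  have hmn : n ≤ m := min_le_min (by linarith) le_rfl
  have hcos : Real.cos m ≤ 1 - 2 / Real.pi ^ 2 * m ^ 2 :=
    Real.cos_le_one_sub_mul_cos_sq (by rw [abs_of_nonneg hm0]; exact min_le_left _ _)
  have hc2 : Real.cos m ≤ 1 - m ^ 2 / 8 := by
    have : (1:ℝ) / 8 ≤ 2 / Real.pi ^ 2 := by
      rw [div_le_div_iff₀ (by norm_num) (by positivity)]
      nlinarith
    nlinarith [sq_nonneg m]
  clear_value m n
  have hab : 0 ≤ a * b := mul_nonneg ha hb
  have key : (a - b) ^ 2 + a * b * (m ^ 2 / 4) ≤ a ^ 2 + b ^ 2 - 2 * a * b * Real.cos m := by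
    nlinarith
  have k1 : |a - b| ≤ √(a ^ 2 + b ^ 2 - 2 * a * b * Real.cos m) := by
    apply Real.abs_le_sqrt
    have : 0 ≤ a * b * (m ^ 2 / 4) := by positivity
    linarith
  have k2 : min a b * n / 2 ≤ √(a ^ 2 + b ^ 2 - 2 * a * b * Real.cos m) := by
    apply Real.le_sqrt_of_sq_le
    have hmin : 0 ≤ min a b := le_min ha hb
    have h1 : min a b * min a b ≤ a * b := mul_le_mul (min_le_left _ _) (min_le_right _ _) hmin ha
    have h2 : n ^ 2 ≤ m ^ 2 := by gcongr
    have h3 : min a b * min a b * n ^ 2 ≤ a * b * m ^ 2 := by gcongr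
    nlinarith [sq_nonneg (a - b)]
  linarith

/-- distance on representatives -/
noncomputable def rawD (L : ℝ) (z w : LInf J × M × ℝ) : ℝ :=
  dist z.1 w.1 + conD L z.2 w.2

theorem cylDistInf_le {L : ℝ} {z w : LInf J × M × ℝ} (h : z.2.2 ≤ L) (h' : w.2.2 ≤ L) :
    cylDistInf L z w ≤ 4 * rawD L z w := by
  have h1 := coneDist_le h h'
  have h0 : 0 ≤ coneDist L z.2 w.2 := Real.sqrt_nonneg _
  have h2 := dist_nonneg (x := z.1) (y := w.1)
  have h3 := conD_nonneg h h'
  unfold cylDistInf rawD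
  apply Real.sqrt_le_iff.2 ⟨by linarith, ?_⟩
  nlinarith

theorem rawD_le {L : ℝ} {z w : LInf J × M × ℝ} (h : z.2.2 ≤ L) (h' : w.2.2 ≤ L) :
    rawD L z w ≤ 4 * cylDistInf L z w := by
  have h1 := conD_le h h'
  have h0 : 0 ≤ coneDist L z.2 w.2 := Real.sqrt_nonneg _
  have h2 := dist_nonneg (x := z.1) (y := w.1)
  have k1 : dist z.1 w.1 ≤ cylDistInf L z w := by
    apply Real.le_sqrt_of_sq_le; nlinarith
  have k2 : coneDist L z.2 w.2 ≤ cylDistInf L z w := by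
    apply Real.le_sqrt_of_sq_le; nlinarith
  unfold rawD
  linarith

/-- the cylinder -/
def Cyl (U : J → Set M) (L : ℝ) : Type _ := {z : LInf J × M × ℝ // GoodRep U L z}

noncomputable instance (U : J → Set M) (L : ℝ) : PseudoMetricSpace (Cyl U L) where
  dist z w := rawD L z.1 w.1
  dist_self z := by simp [rawD, conD]
  dist_comm z w := by simp only [rawD]; rw [dist_comm, conD_comm]
  dist_triangle x y z := by
    have h1 := dist_triangle x.1.1 y.1.1 z.1.1
    have h2 := conD_triangle (c := x.1.2) (c' := y.1.2) (c'' := z.1.2) x.2.2.1.2 y.2.2.1.2 z.2.2.1.2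
    simp only [rawD]
    linarith

theorem Cyl.dist_def {U : J → Set M} {L : ℝ} (z w : Cyl U L) : dist z w =
    dist z.1.1 w.1.1 + (|z.1.2.2 - w.1.2.2| +
      min (L - z.1.2.2) (L - w.1.2.2) * min 2 (dist z.1.2.1 w.1.2.1)) := rfl

theorem Cyl.aux_nonneg {U : J → Set M} {L : ℝ} (z w : Cyl U L) :
    0 ≤ min (L - z.1.2.2) (L - w.1.2.2) * min 2 (dist z.1.2.1 w.1.2.1) :=
  mul_nonneg (le_min (by linarith [z.2.2.1.2]) (by linarith [w.2.2.1.2]))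
    (le_min (by norm_num) dist_nonneg)

theorem Cyl.lip_theta (U : J → Set M) (L : ℝ) : LipschitzWith 1 (fun z : Cyl U L => z.1.1) :=
  LipschitzWith.of_dist_le_mul fun z w => by
    rw [Cyl.dist_def]
    have := Cyl.aux_nonneg z w
    have := abs_nonneg (z.1.2.2 - w.1.2.2)
    simp only [NNReal.coe_one, one_mul]
    linarith

theorem Cyl.lip_t (U : J → Set M) (L : ℝ) : LipschitzWith 1 (fun z : Cyl U L => z.1.2.2) :=
  LipschitzWith.of_dist_le_mul fun z w => by
    rw [Cyl.dist_def]
    have := Cyl.aux_nonneg z w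
    have := dist_nonneg (x := z.1.1) (y := w.1.1)
    simp only [NNReal.coe_one, one_mul]
    rw [Real.dist_eq]
    linarith

theorem Cyl.ll_x {U : J → Set M} {L : ℝ} (z : Cyl U L) (hz : z.1.2.2 < L) :
    LLAt (fun z : Cyl U L => z.1.2.1) z := by
  set c := (L - z.1.2.2) / 2 with hc
  have hc0 : 0 < c := by rw [hc]; linarith
  apply LLAt.of_eventually (1 / c)
  have hct : Continuous (fun p : Cyl U L × Cyl U L => p.1.1.2.2) :=
    (Cyl.lip_t U L).continuous.comp continuous_fst
  have hct' : Continuous (fun p : Cyl U L × Cyl U L => p.2.1.2.2) :=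
    (Cyl.lip_t U L).continuous.comp continuous_snd
  have hd : Continuous (fun p : Cyl U L × Cyl U L => dist p.1 p.2) := continuous_dist
  have e1 : ∀ᶠ p : Cyl U L × Cyl U L in 𝓝 (z, z), p.1.1.2.2 < L - c :=
    hct.continuousAt.eventually_lt continuousAt_const (by simp only; linarith)
  have e2 : ∀ᶠ p : Cyl U L × Cyl U L in 𝓝 (z, z), p.2.1.2.2 < L - c :=
    hct'.continuousAt.eventually_lt continuousAt_const (by simp only; linarith)
  have e3 : ∀ᶠ p : Cyl U L × Cyl U L in 𝓝 (z, z), dist p.1 p.2 < 2 * c :=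
    hd.continuousAt.eventually_lt continuousAt_const (by simp only [dist_self]; linarith)
  filter_upwards [e1, e2, e3] with p h1 h2 h3
  have h4 := Cyl.dist_def p.1 p.2
  have h5 := dist_nonneg (x := p.1.1.1) (y := p.2.1.1)
  have h6 := abs_nonneg (p.1.1.2.2 - p.2.1.2.2)
  have h7 : c ≤ min (L - p.1.1.2.2) (L - p.2.1.2.2) := le_min (by linarith) (by linarith)
  have h8 : 0 ≤ min 2 (dist p.1.1.2.1 p.2.1.2.1) := le_min (by norm_num) dist_nonneg
  have h9 : c * min 2 (dist p.1.1.2.1 p.2.1.2.1) ≤ dist p.1 p.2 := by nlinarith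
  have h10 : dist p.1.1.2.1 p.2.1.2.1 < 2 := by
    by_contra hh
    rw [min_eq_left (not_lt.1 hh)] at h9
    linarith
  rw [min_eq_right h10.le] at h9
  rw [div_mul_eq_mul_div, one_mul, le_div_iff₀ hc0]
  linarith

/-! nerve facts -/

theorem nerve_exists_max {U : J → Set M} {θ : LInf J} (h : θ ∈ NerveSetInf U) :
    ∃ i, 0 < θ i ∧ ∀ j, θ j ≤ θ i := by
  classical
  obtain ⟨h0, hf, hs, -⟩ := h
  have hne : hf.toFinset.Nonempty := by
    by_contra hne
    rw [Finset.not_nonempty_iff_eq_empty] at hne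
    rw [finsum_eq_sum_of_support_subset (s := hf.toFinset) _ (by simp), hne] at hs
    simp at hs
  obtain ⟨i, hi, hm⟩ := hf.toFinset.exists_max_image (fun j => θ j) hne
  have hi' : θ i ≠ 0 := by simpa using hi
  refine ⟨i, lt_of_le_of_ne (h0 i).1 hi'.symm, fun j => ?_⟩
  by_cases hj : θ j = 0
  · rw [hj]; exact (h0 i).1
  · exact hm j (by simpa using hj)

theorem nerve_norm {U : J → Set M} {θ : LInf J} (h : θ ∈ NerveSetInf U) {i : J}
    (hm : ∀ j, θ j ≤ θ i) : ‖θ‖ = θ i := by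
  have h0 := h.1
  apply le_antisymm
  · apply lp.norm_le_of_forall_le (h0 i).1
    intro j
    rw [Real.norm_eq_abs, abs_of_nonneg (h0 j).1]
    exact hm j
  · exact (le_abs_self _).trans (lp.norm_apply_le_norm (by simp) θ i)

theorem nerve_norm_pos {U : J → Set M} {θ : LInf J} (h : θ ∈ NerveSetInf U) : 0 < ‖θ‖ := by
  obtain ⟨i, hi, hm⟩ := nerve_exists_max h
  rwa [nerve_norm h hm]

theorem apply_lip (j : J) : LipschitzWith 1 (fun θ : LInf J => θ j) :=
  LipschitzWith.of_dist_le_mul fun θ θ' => by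
    simp only [NNReal.coe_one, one_mul]
    rw [dist_eq_norm, dist_eq_norm]
    exact lp.norm_apply_le_norm (by simp) (θ - θ') j

/-- locally finitely many vertices -/
theorem nerve_local_finite {U : J → Set M} (hU : IsGoodCovering U) {θ₀ : LInf J}
    (h : θ₀ ∈ NerveSetInf U) :
    ∃ T : Finset J, ∀ᶠ θ in 𝓝 θ₀, θ ∈ NerveSetInf U → ∀ j, θ j ≠ 0 → j ∈ T := by
  obtain ⟨i, hi, -⟩ := nerve_exists_max h
  have hfin := hU.2.2.1.finite_nonempty_inter_compact (hU.2.2.2.1 i)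
  refine ⟨hfin.toFinset, ?_⟩
  have : ∀ᶠ θ : LInf J in 𝓝 θ₀, 0 < θ i :=
    continuousAt_const.eventually_lt (apply_lip i).continuous.continuousAt hi
  filter_upwards [this] with θ hθ hN j hj
  obtain ⟨x, hx⟩ := hN.2.2.2
  have hx' := mem_iInter₂.1 hx
  rw [Set.Finite.mem_toFinset]
  exact ⟨x, hx' j hj, subset_closure (hx' i hθ.ne')⟩

/-- open star-like regions -/
def Oset (τ : Finset J) : Set (LInf J) :=
  {θ | ∀ i ∈ τ, 0 < θ i ∧ ∀ j, j ∉ τ → θ j < θ i}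

/-- depth in the region -/
noncomputable def gapF (τ : Finset J) (θ : LInf J) : ℝ := infDist θ (Oset τ)ᶜ

theorem gapF_lip (τ : Finset J) : LipschitzWith 1 (gapF τ) := lipschitz_infDist_pt _

theorem gapF_nonneg (τ : Finset J) (θ : LInf J) : 0 ≤ gapF τ θ := infDist_nonneg

theorem mem_Oset_of_gapF {τ : Finset J} {θ : LInf J} (h : 0 < gapF τ θ) : θ ∈ Oset τ := by
  by_contra hh
  have : infDist θ (Oset τ)ᶜ = 0 := infDist_zero_of_mem hh
  unfold gapF at h
  linarith

theorem nonempty_of_gapF {τ : Finset J} {θ : LInf J} (h : 0 < gapF τ θ) : τ.Nonempty := by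
  by_contra hh
  rw [Finset.not_nonempty_iff_eq_empty] at hh
  subst hh
  have : (Oset (∅ : Finset J))ᶜ = ∅ := by
    ext θ; simp [Oset]
  simp [gapF, this] at h

theorem Oset_nested {τ τ' : Finset J} {θ : LInf J} (h : θ ∈ Oset τ) (h' : θ ∈ Oset τ')
    (hc : τ'.card ≤ τ.card) : τ' ⊆ τ := by
  by_contra hh
  obtain ⟨j, hj, hj'⟩ := Finset.not_subset.1 hh
  have h2 : ¬ τ ⊆ τ' := by
    intro hs
    exact hh (Finset.eq_of_subset_of_card_le hs hc ▸ Finset.Subset.refl _)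
  obtain ⟨i, hi, hi'⟩ := Finset.not_subset.1 h2
  exact lt_asymm ((h i hi).2 j hj') ((h' j hj).2 i hi')

theorem le_gapF {τ : Finset J} (hτ : τ.Nonempty) {θ : LInf J} {r : ℝ}
    (h : ∀ i ∈ τ, r ≤ θ i ∧ ∀ j, j ∉ τ → θ j + 2 * r ≤ θ i) : r ≤ gapF τ θ := by
  have hne : ((Oset τ)ᶜ : Set (LInf J)).Nonempty := by
    refine ⟨0, fun h0 => ?_⟩
    obtain ⟨i, hi⟩ := hτ
    simpa using (h0 i hi).1
  by_contra hh
  obtain ⟨θ', h1, h2⟩ := (infDist_lt_iff hne).1 (not_le.1 hh)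
  apply h1
  have hd : ∀ j, |θ j - θ' j| < r := fun j => by
    have := (apply_lip j).dist_le_mul θ θ'
    rw [Real.dist_eq] at this
    simp only [NNReal.coe_one, one_mul] at this
    linarith
  intro i hi
  have hdi := abs_lt.1 (hd i)
  refine ⟨by linarith [(h i hi).1], fun j hj => ?_⟩
  have hdj := abs_lt.1 (hd j)
  linarith [(h i hi).2 j hj]

/-- normalised depth -/
noncomputable def qF (τ : Finset J) (θ : LInf J) : ℝ := gapF τ θ / (‖θ‖ * (1 / 2) ^ (τ.card + 2))

theorem exists_qF {U : J → Set M} {θ : LInf J} (h : θ ∈ NerveSetInf U) :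
    ∃ τ : Finset J, 1 ≤ qF τ θ := by
  classical
  obtain ⟨i, hi, hm⟩ := nerve_exists_max h
  have hnorm := nerve_norm h hm
  have hpos := nerve_norm_pos h
  have hf := h.2.1
  set e : ℕ → ℝ := fun k => ‖θ‖ * (1 / 2 + (1 / 2) ^ (k + 1)) with he
  have hek : ∀ k, 0 < e k := fun k => by positivity
  set T : ℕ → Finset J := fun k => hf.toFinset.filter (fun j => e k < θ j) with hT
  have hmem : ∀ k j, j ∈ T k ↔ e k < θ j := fun k j => by
    simp only [hT, Finset.mem_filter, Set.Finite.mem_toFinset, Function.mem_support]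
    exact ⟨fun q => q.2, fun q => ⟨((hek k).trans q).ne', q⟩⟩
  have hex : ∃ k, (T (k + 1)).card ≤ k + 1 := by
    refine ⟨hf.toFinset.card, ?_⟩
    exact (Finset.card_le_card (Finset.filter_subset _ _)).trans (Nat.le_succ _)
  set k := Nat.find hex with hk
  have hk1 : (T (k + 1)).card ≤ k + 1 := Nat.find_spec hex
  -- the set of indices with `e k ≤ θ j`
  set S : Finset J := hf.toFinset.filter (fun j => e k ≤ θ j) with hS
  have hmemS : ∀ j, j ∈ S ↔ e k ≤ θ j := fun j => by
    simp only [hS, Finset.mem_filter, Set.Finite.mem_toFinset, Function.mem_support]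
    exact ⟨fun q => q.2, fun q => ⟨((hek k).trans_le q).ne', q⟩⟩
  have hgap : e k - e (k + 1) = ‖θ‖ * (1 / 2) ^ (k + 2) := by
    simp only [he]; ring
  have hgap0 : 0 < ‖θ‖ * (1 / 2) ^ (k + 2) := by positivity
  have hST : S ⊆ T (k + 1) := fun j hj => by
    rw [hmem]; rw [hmemS] at hj; linarith
  have hScard : k + 1 ≤ S.card := by
    rcases Nat.eq_zero_or_pos k with hk0 | hk0
    · rw [hk0]
      apply Finset.card_pos.2
      refine ⟨i, ?_⟩
      rw [hmemS, hk0, ← hnorm]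
      simp only [he]
      linarith
    · have := Nat.find_min hex (m := k - 1) (by omega)
      rw [Nat.sub_add_cancel hk0, not_le] at this
      refine this.trans_le (Finset.card_le_card fun j hj => ?_)
      rw [hmemS]; exact ((hmem k j).1 hj).le
  have hSeq : S = T (k + 1) := Finset.eq_of_subset_of_card_le hST (by omega)
  have hcard : S.card = k + 1 := le_antisymm (by rw [hSeq]; exact hk1) hScard
  refine ⟨S, ?_⟩
  unfold qF
  rw [hcard, one_le_div (by positivity)]
  apply le_gapF (Finset.card_pos.1 (by omega))
  intro a ha
  rw [hmemS] at ha
  have e1 : ‖θ‖ * (1 / 2) ^ (k + 2) = 2 * (‖θ‖ * (1 / 2) ^ (k + 1 + 2)) := by ring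
  refine ⟨?_, fun j hj => ?_⟩
  · have : e (k + 1) = e (k + 1) := rfl
    linarith [hek (k + 1)]
  · rw [hSeq, hmem, not_lt] at hj
    linarith

theorem qF_nonneg (τ : Finset J) (θ : LInf J) : 0 ≤ qF τ θ :=
  div_nonneg (gapF_nonneg _ _) (by positivity)

theorem gapF_of_qF {τ : Finset J} {θ : LInf J} (h : 0 < qF τ θ) : 0 < gapF τ θ := by
  by_contra hh
  have : gapF τ θ = 0 := le_antisymm (not_lt.1 hh) (gapF_nonneg _ _)
  simp [qF, this] at h

theorem sub_of_qF {U : J → Set M} {τ : Finset J} {θ : LInf J} (_hN : θ ∈ NerveSetInf U)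
    (h : 0 < qF τ θ) : ∀ j ∈ τ, θ j ≠ 0 :=
  fun j hj => ((mem_Oset_of_gapF (gapF_of_qF h)) j hj).1.ne'

theorem qF_ll {θ : LInf J} (hθ : 0 < ‖θ‖) (τ : Finset J) : LLAt (qF τ) θ := by
  refine LLAt.div (LLAt.of_lipschitz (gapF_lip τ) θ)
    (LLAt.mul (LLAt.of_lipschitz lipschitzWith_one_norm θ) (LLAt.const _ _)) ?_
  positivity

end


section
variable {M J : Type*} [MetricSpace M]

noncomputable def uA (s : ℝ) : ℝ := clampU (3 * s)
noncomputable def uB (s : ℝ) : ℝ := clampU (3 * s - 1)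
noncomputable def uC (s : ℝ) : ℝ := clampU (3 * s - 2)

/-- killing amounts -/
noncomputable def cF (L : ℝ) (θ : LInf J) (t s : ℝ) (τ : Finset J) : ℝ :=
  uA s * clampU (4 * t / L) * clampU (4 * qF τ θ - 1)

/-- contraction amounts -/
noncomputable def aF (L : ℝ) (θ : LInf J) (t s : ℝ) (τ : Finset J) : ℝ :=
  uB s * clampU (4 * t / L - 1) * clampU (2 * qF τ θ - 1)

theorem cF_nonneg (L : ℝ) (θ : LInf J) (t s : ℝ) (τ : Finset J) : 0 ≤ cF L θ t s τ :=
  mul_nonneg (mul_nonneg (clampU_nonneg _) (clampU_nonneg _)) (clampU_nonneg _)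

theorem cF_le_one (L : ℝ) (θ : LInf J) (t s : ℝ) (τ : Finset J) : cF L θ t s τ ≤ 1 :=
  mul_le_one₀ (mul_le_one₀ (clampU_le_one _) (clampU_nonneg _) (clampU_le_one _))
    (clampU_nonneg _) (clampU_le_one _)

theorem aF_nonneg (L : ℝ) (θ : LInf J) (t s : ℝ) (τ : Finset J) : 0 ≤ aF L θ t s τ :=
  mul_nonneg (mul_nonneg (clampU_nonneg _) (clampU_nonneg _)) (clampU_nonneg _)

theorem qF_of_cF {L : ℝ} {θ : LInf J} {t s : ℝ} {τ : Finset J} (h : cF L θ t s τ ≠ 0) :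
    0 < qF τ θ := by
  have h1 : clampU (4 * qF τ θ - 1) ≠ 0 := right_ne_zero_of_mul h
  have := pos_of_clampU_pos (lt_of_le_of_ne (clampU_nonneg _) h1.symm)
  linarith

theorem of_aF {L : ℝ} {θ : LInf J} {t s : ℝ} {τ : Finset J} (h : 0 < aF L θ t s τ) :
    1 / 2 < qF τ θ ∧ cF L θ t s τ = 1 := by
  have h1 : clampU (2 * qF τ θ - 1) ≠ 0 := right_ne_zero_of_mul h.ne'
  have h2 : uB s * clampU (4 * t / L - 1) ≠ 0 := left_ne_zero_of_mul h.ne'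
  have h3 : clampU (4 * t / L - 1) ≠ 0 := right_ne_zero_of_mul h2
  have h4 : clampU (3 * s - 1) ≠ 0 := left_ne_zero_of_mul h2
  have k1 := pos_of_clampU_pos (lt_of_le_of_ne (clampU_nonneg _) h1.symm)
  have k3 := pos_of_clampU_pos (lt_of_le_of_ne (clampU_nonneg _) h3.symm)
  have k4 := pos_of_clampU_pos (lt_of_le_of_ne (clampU_nonneg _) h4.symm)
  refine ⟨by linarith, ?_⟩
  unfold cF uA
  rw [clampU_of_one_le (by linarith), clampU_of_one_le (by linarith),
    clampU_of_one_le (by linarith)]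
  norm_num

theorem aF_nested (L : ℝ) (θ : LInf J) (t s : ℝ) : Nested (aF L θ t s) := by
  refine ⟨fun τ h => ?_, fun τ τ' h h' hc => ?_⟩
  · exact nonempty_of_gapF (gapF_of_qF (by linarith [(of_aF h).1]))
  · exact Oset_nested (mem_Oset_of_gapF (gapF_of_qF (by linarith [(of_aF h).1])))
      (mem_Oset_of_gapF (gapF_of_qF (by linarith [(of_aF h').1]))) hc

open Classical in
/-- unnormalised weights -/
noncomputable def wF (L : ℝ) (θ : LInf J) (t s : ℝ) (j : J) : ℝ :=
  θ j * ∏ᶠ τ : Finset J, (if j ∈ τ then 1 else 1 - cF L θ t s τ)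

open Classical in
/-- new barycentric coordinates -/
noncomputable def thF (L : ℝ) (θ : LInf J) (t s : ℝ) : LInf J :=
  ∑ᶠ j : J, (wF L θ t s j / ∑ᶠ i, wF L θ t s i) • lp.single ⊤ j (1 : ℝ)

open Classical in
theorem wF_eq {U : J → Set M} {L : ℝ} {θ : LInf J} (hN : θ ∈ NerveSetInf U) (t s : ℝ)
    {T : Finset J} (hT : ∀ j, θ j ≠ 0 → j ∈ T) (j : J) :
    wF L θ t s j = θ j * ∏ τ ∈ T.powerset, (if j ∈ τ then 1 else 1 - cF L θ t s τ) := by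
  unfold wF
  rw [finprod_eq_prod_of_mulSupport_subset]
  intro τ hτ
  rw [Function.mem_mulSupport] at hτ
  have : cF L θ t s τ ≠ 0 := by
    intro h0
    apply hτ
    simp [h0]
  simp only [Finset.coe_powerset, Set.mem_preimage, Set.mem_powerset_iff]
  intro i hi
  exact hT i (sub_of_qF hN (qF_of_cF this) i hi)

theorem wF_zero {L : ℝ} {θ : LInf J} {t s : ℝ} {j : J} (h : θ j = 0) : wF L θ t s j = 0 := by
  simp [wF, h]

theorem wF_sum_eq {L : ℝ} {θ : LInf J} (t s : ℝ)
    {T : Finset J} (hT : ∀ j, θ j ≠ 0 → j ∈ T) :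
    ∑ᶠ i, wF L θ t s i = ∑ i ∈ T, wF L θ t s i := by
  apply finsum_eq_sum_of_support_subset
  intro j hj
  exact hT j fun h => hj (wF_zero h)

open Classical in
theorem thF_eq {L : ℝ} {θ : LInf J} (t s : ℝ)
    {T : Finset J} (hT : ∀ j, θ j ≠ 0 → j ∈ T) :
    thF L θ t s = ∑ j ∈ T, (wF L θ t s j / ∑ i ∈ T, wF L θ t s i) • lp.single ⊤ j (1 : ℝ) := by
  unfold thF
  rw [wF_sum_eq t s hT]
  apply finsum_eq_sum_of_support_subset
  intro j hj
  refine hT j fun h => hj ?_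
  simp [wF_zero h]

theorem thF_apply {L : ℝ} {θ : LInf J} (t s : ℝ)
    {T : Finset J} (hT : ∀ j, θ j ≠ 0 → j ∈ T) (k : J) :
    thF L θ t s k = wF L θ t s k / ∑ i ∈ T, wF L θ t s i := by
  classical
  rw [thF_eq t s hT]
  rw [lp.coeFn_sum, Finset.sum_apply]
  have : ∀ j ∈ T, ((wF L θ t s j / ∑ i ∈ T, wF L θ t s i) • lp.single ⊤ j (1 : ℝ) : LInf J) k =
      if k = j then wF L θ t s j / ∑ i ∈ T, wF L θ t s i else 0 := by
    intro j _
    rw [lp.coeFn_smul, Pi.smul_apply, lp.single_apply]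
    by_cases h : k = j
    · subst h; simp
    · simp [h]
  rw [Finset.sum_congr rfl this, Finset.sum_ite_eq]
  by_cases hk : k ∈ T
  · simp [hk]
  · have : θ k = 0 := by by_contra h; exact hk (hT k h)
    simp [hk, wF_zero this]

theorem wF_nonneg {U : J → Set M} {L : ℝ} {θ : LInf J} (hN : θ ∈ NerveSetInf U) (t s : ℝ)
    (j : J) : 0 ≤ wF L θ t s j := by
  classical
  rw [wF_eq hN t s (T := hN.2.1.toFinset) (by simp)]
  refine mul_nonneg (hN.1 j).1 (Finset.prod_nonneg fun τ _ => ?_)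
  split_ifs
  · norm_num
  · linarith [cF_le_one L θ t s τ]

theorem wF_sum_pos {U : J → Set M} {L : ℝ} {θ : LInf J} (hN : θ ∈ NerveSetInf U) (t s : ℝ)
    {T : Finset J} (hT : ∀ j, θ j ≠ 0 → j ∈ T) :
    0 < ∑ i ∈ T, wF L θ t s i := by
  classical
  obtain ⟨i, hi, hm⟩ := nerve_exists_max hN
  refine Finset.sum_pos' (fun j _ => wF_nonneg hN t s j) ⟨i, hT i hi.ne', ?_⟩
  rw [wF_eq hN t s hT, Finset.prod_eq_one, mul_one]
  · exact hi
  · intro τ _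
    split_ifs with h
    · rfl
    · have : cF L θ t s τ = 0 := by
        by_contra hc
        have h1 := gapF_of_qF (qF_of_cF hc)
        obtain ⟨l, hl⟩ := nonempty_of_gapF h1
        exact absurd ((mem_Oset_of_gapF h1 l hl).2 i h) (not_lt.2 (hm l))
      rw [this, sub_zero]

theorem thF_ne {L : ℝ} {U : J → Set M} {θ : LInf J} (hN : θ ∈ NerveSetInf U) {t s : ℝ} {j : J}
    (h : thF L θ t s j ≠ 0) :
    θ j ≠ 0 ∧ ∀ τ, 0 < aF L θ t s τ → j ∈ τ := by
  classical
  have hT : ∀ j, θ j ≠ 0 → j ∈ hN.2.1.toFinset := by simp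
  rw [thF_apply t s hT] at h
  have hw : wF L θ t s j ≠ 0 := (div_ne_zero_iff.1 h).1
  refine ⟨fun h0 => hw (wF_zero h0), fun τ hτ => ?_⟩
  by_contra hj
  apply hw
  rw [wF_eq hN t s hT]
  have := of_aF hτ
  rw [Finset.prod_eq_zero (i := τ), mul_zero]
  · rw [Finset.mem_powerset]
    intro i hi
    exact hT i (sub_of_qF hN (by linarith) i hi)
  · rw [if_neg hj, this.2, sub_self]

theorem thF_nerve {L : ℝ} {U : J → Set M} {θ : LInf J} (hN : θ ∈ NerveSetInf U) (t s : ℝ) :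
    thF L θ t s ∈ NerveSetInf U := by
  classical
  have hT : ∀ j, θ j ≠ 0 → j ∈ hN.2.1.toFinset := by simp
  have hW := wF_sum_pos (L := L) hN t s hT
  have hsub : (Function.support fun j => thF L θ t s j) ⊆ Function.support fun j => θ j :=
    fun j hj => (thF_ne hN hj).1
  refine ⟨fun j => ?_, hN.2.1.subset hsub, ?_, ?_⟩
  · rw [thF_apply t s hT]
    refine ⟨div_nonneg (wF_nonneg hN t s j) hW.le, ?_⟩
    rw [div_le_one hW]
    by_cases hj : θ j = 0
    · rw [wF_zero hj]; exact hW.le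
    · exact Finset.single_le_sum (f := fun j => wF L θ t s j) (fun i _ => wF_nonneg hN t s i)
        (hT j hj)
  · rw [finsum_eq_sum_of_support_subset (s := hN.2.1.toFinset) _ (by simpa using hsub)]
    simp only [thF_apply t s hT]
    rw [← Finset.sum_div, div_self hW.ne']
  · obtain ⟨x, hx⟩ := hN.2.2.2
    exact ⟨x, mem_iInter₂.2 fun j hj => mem_iInter₂.1 hx j (hsub hj)⟩

theorem thF_id {L : ℝ} {U : J → Set M} {θ : LInf J} (hN : θ ∈ NerveSetInf U) {t s : ℝ}
    (h : ∀ τ, cF L θ t s τ = 0) : thF L θ t s = θ := by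
  classical
  have hT : ∀ j, θ j ≠ 0 → j ∈ hN.2.1.toFinset := by simp
  have hw : ∀ j, wF L θ t s j = θ j := fun j => by
    rw [wF_eq hN t s hT, Finset.prod_eq_one, mul_one]
    intro τ _
    simp [h τ]
  ext j
  rw [thF_apply t s hT, hw]
  simp only [hw]
  rw [← finsum_eq_sum_of_support_subset (s := hN.2.1.toFinset) (fun j => θ j) (by simp),
    hN.2.2.1, div_one]

/-- new base point -/
noncomputable def xF (F : Finset J → M → ℝ → M) (L : ℝ) (θ : LInf J) (x : M) (t s : ℝ) : M :=
  compo F (aF L θ t s) (Function.support fun j => θ j).ncard x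

theorem aF_card {L : ℝ} {U : J → Set M} {θ : LInf J} (hN : θ ∈ NerveSetInf U) {t s : ℝ}
    {T : Finset J} (hT : ∀ j, θ j ≠ 0 → j ∈ T)
    {τ : Finset J} (h : 0 < aF L θ t s τ) : τ ⊆ T :=
  fun i hi => hT i (sub_of_qF hN (by linarith [(of_aF h).1]) i hi)

theorem xF_eq (F : Finset J → M → ℝ → M) {U : J → Set M} {L : ℝ} {θ : LInf J}
    (hN : θ ∈ NerveSetInf U) (x : M) (t s : ℝ) {T : Finset J} (hT : ∀ j, θ j ≠ 0 → j ∈ T) :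
    xF F L θ x t s = compo F (aF L θ t s) T.card x := by
  unfold xF
  rw [Set.ncard_eq_toFinset_card _ hN.2.1]
  symm
  apply compo_stable
  · intro τ h1 h2
    exact absurd (Finset.card_le_card (aF_card hN (T := hN.2.1.toFinset) (by simp) h2))
      (not_le.2 h1)
  · exact Finset.card_le_card fun j hj => hT j (by simpa using hj)

theorem inv_aF {L : ℝ} {U : J → Set M} {θ : LInf J} (hN : θ ∈ NerveSetInf U) {x : M}
    (hx : ∀ j, θ j ≠ 0 → x ∈ U j) (t s : ℝ) (n : ℕ) : InvN U (aF L θ t s) n x :=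
  fun _ _ h => mem_iInter₂.2 fun j hj => hx j
    (sub_of_qF hN (by linarith [(of_aF h).1]) j hj)

theorem xF_mem {F : Finset J → M → ℝ → M} {K : Finset J → ℝ} {L : ℝ} {U : J → Set M}
    (hF : Contr U F K) {θ : LInf J} (hN : θ ∈ NerveSetInf U) {x : M}
    (hx : ∀ j, θ j ≠ 0 → x ∈ U j) (t s : ℝ) :
    ∀ j, thF L θ t s j ≠ 0 → xF F L θ x t s ∈ U j := by
  have := compo_mem hF (aF_nested L θ t s) {j | thF L θ t s j ≠ 0}
    (fun τ hτ j hj => (thF_ne hN hj).2 τ hτ) (Function.support fun j => θ j).ncard x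
    (inv_aF hN hx t s _) (fun j hj => hx j (thF_ne hN hj).1)
  exact this

/-- the homotopy on good representatives -/
noncomputable def phiF {F : Finset J → M → ℝ → M} {K : Finset J → ℝ} {U : J → Set M}
    (hF : Contr U F K) (L : ℝ) (p : Cyl U L × unitInterval) : Cyl U L :=
  ⟨(thF L p.1.1.1 p.1.1.2.2 p.2, xF F L p.1.1.1 p.1.1.2.1 p.1.1.2.2 p.2,
    (1 - uC p.2) * p.1.1.2.2), thF_nerve p.1.2.1 _ _, by
      have h0 := p.1.2.2.1.1
      have h1 := p.1.2.2.1.2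
      have h2 : 0 ≤ uC p.2 := clampU_nonneg _
      have h3 : uC p.2 ≤ 1 := clampU_le_one _
      simp only [mem_Icc]
      constructor
      · exact mul_nonneg (by linarith) h0
      · nlinarith, xF_mem hF p.1.2.1 p.1.2.2.2 _ _⟩

section ll
variable {U : J → Set M} {L : ℝ} (p₀ : Cyl U L × unitInterval)

theorem ll_s : LLAt (fun p : Cyl U L × unitInterval => (p.2 : ℝ)) p₀ :=
  LLAt.of_lipschitz ((LipschitzWith.subtype_val _).comp LipschitzWith.prod_snd) p₀

theorem ll_t : LLAt (fun p : Cyl U L × unitInterval => p.1.1.2.2) p₀ :=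
  LLAt.of_lipschitz ((Cyl.lip_t U L).comp LipschitzWith.prod_fst) p₀

theorem ll_theta : LLAt (fun p : Cyl U L × unitInterval => p.1.1.1) p₀ :=
  LLAt.of_lipschitz ((Cyl.lip_theta U L).comp LipschitzWith.prod_fst) p₀

theorem ll_q (τ : Finset J) : LLAt (fun p : Cyl U L × unitInterval => qF τ p.1.1.1) p₀ :=
  LLAt.comp (qF_ll (nerve_norm_pos p₀.1.2.1) τ) (ll_theta p₀)

theorem ll_a (τ : Finset J) :
    LLAt (fun p : Cyl U L × unitInterval => aF L p.1.1.1 p.1.1.2.2 p.2 τ) p₀ := by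
  have h1 : LLAt (fun p : Cyl U L × unitInterval => uB p.2) p₀ :=
    LLAt.clamp (((LLAt.const 3 p₀).mul (ll_s p₀)).sub (LLAt.const 1 p₀))
  have h2 : LLAt (fun p : Cyl U L × unitInterval => clampU (4 * p.1.1.2.2 / L - 1)) p₀ := by
    simp only [div_eq_mul_inv]
    exact LLAt.clamp
      ((((LLAt.const 4 p₀).mul (ll_t p₀)).mul (LLAt.const L⁻¹ p₀)).sub (LLAt.const 1 p₀))
  have h3 : LLAt (fun p : Cyl U L × unitInterval => clampU (2 * qF τ p.1.1.1 - 1)) p₀ :=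
    LLAt.clamp (((LLAt.const 2 p₀).mul (ll_q p₀ τ)).sub (LLAt.const 1 p₀))
  exact (h1.mul h2).mul h3

theorem ll_c (τ : Finset J) :
    LLAt (fun p : Cyl U L × unitInterval => cF L p.1.1.1 p.1.1.2.2 p.2 τ) p₀ := by
  have h1 : LLAt (fun p : Cyl U L × unitInterval => uA p.2) p₀ :=
    LLAt.clamp ((LLAt.const 3 p₀).mul (ll_s p₀))
  have h2 : LLAt (fun p : Cyl U L × unitInterval => clampU (4 * p.1.1.2.2 / L)) p₀ := by
    simp only [div_eq_mul_inv]
    exact LLAt.clamp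
      (((LLAt.const 4 p₀).mul (ll_t p₀)).mul (LLAt.const L⁻¹ p₀))
  have h3 : LLAt (fun p : Cyl U L × unitInterval => clampU (4 * qF τ p.1.1.1 - 1)) p₀ :=
    LLAt.clamp (((LLAt.const 4 p₀).mul (ll_q p₀ τ)).sub (LLAt.const 1 p₀))
  exact (h1.mul h2).mul h3

theorem ll_t' : LLAt (fun p : Cyl U L × unitInterval => (1 - uC p.2) * p.1.1.2.2) p₀ := by
  have h1 : LLAt (fun p : Cyl U L × unitInterval => uC p.2) p₀ :=
    LLAt.clamp (((LLAt.const 3 p₀).mul (ll_s p₀)).sub (LLAt.const 2 p₀))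
  exact ((LLAt.const 1 p₀).sub h1).mul (ll_t p₀)

theorem ev_T (hU : IsGoodCovering U) : ∃ T : Finset J,
    ∀ᶠ p : Cyl U L × unitInterval in 𝓝 p₀, ∀ j, p.1.1.1 j ≠ 0 → j ∈ T := by
  obtain ⟨T, hT⟩ := nerve_local_finite hU p₀.1.2.1
  refine ⟨T, ?_⟩
  filter_upwards [(ll_theta p₀).continuousAt.eventually hT] with p hp
  exact hp p.1.2.1

theorem ll_th (hU : IsGoodCovering U) :
    LLAt (fun p : Cyl U L × unitInterval => thF L p.1.1.1 p.1.1.2.2 p.2) p₀ := by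
  classical
  obtain ⟨T, hT⟩ := ev_T p₀ hU
  have hw : ∀ j, LLAt (fun p : Cyl U L × unitInterval => wF L p.1.1.1 p.1.1.2.2 p.2 j) p₀ := by
    intro j
    refine LLAt.congr (f := fun p : Cyl U L × unitInterval => p.1.1.1 j *
      ∏ τ ∈ T.powerset, (if j ∈ τ then 1 else 1 - cF L p.1.1.1 p.1.1.2.2 p.2 τ)) ?_ ?_
    · refine LLAt.mul ((LLAt.of_lipschitz (apply_lip j) _).comp (ll_theta p₀))
        (LLAt.prod _ fun τ _ => ?_)
      by_cases h : j ∈ τ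
      · simp only [h, if_true]; exact LLAt.const _ _
      · simp only [h, if_false]; exact (LLAt.const _ _).sub (ll_c p₀ τ)
    · filter_upwards [hT] with p hp
      exact wF_eq p.1.2.1 _ _ hp j
  refine LLAt.congr (f := fun p : Cyl U L × unitInterval =>
    ∑ j ∈ T, (wF L p.1.1.1 p.1.1.2.2 p.2 j / ∑ i ∈ T, wF L p.1.1.1 p.1.1.2.2 p.2 i) •
      lp.single ⊤ j (1 : ℝ)) ?_ ?_
  · refine LLAt.sum _ fun j _ => LLAt.smul_const
      (LLAt.div (hw j) (LLAt.sum _ fun i _ => hw i) ?_) _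
    exact (wF_sum_pos p₀.1.2.1 _ _ hT.self_of_nhds).ne'
  · filter_upwards [hT] with p hp
    exact thF_eq _ _ hp

theorem ev_a (T : Finset J) : ∃ Ka : ℝ, 0 ≤ Ka ∧
    ∀ᶠ pp : (Cyl U L × unitInterval) × (Cyl U L × unitInterval) in 𝓝 (p₀, p₀),
      ∀ τ ∈ T.powerset, |aF L pp.1.1.1.1 pp.1.1.1.2.2 pp.1.2 τ -
        aF L pp.2.1.1.1 pp.2.1.1.2.2 pp.2.2 τ| ≤ Ka * dist pp.1 pp.2 := by
  choose K hK0 hK using fun τ : Finset J => (ll_a p₀ τ).exists_ball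
  refine ⟨∑ τ ∈ T.powerset, K τ, Finset.sum_nonneg fun τ _ => hK0 τ, ?_⟩
  rw [Filter.eventually_all_finset]
  intro τ hτ
  filter_upwards [hK τ] with pp h
  rw [Real.dist_eq] at h
  exact h.trans (mul_le_mul_of_nonneg_right
    (Finset.single_le_sum (fun τ _ => hK0 τ) hτ) dist_nonneg)

theorem qcross {θ θ' : LInf J} {m : ℝ} (hm : 0 < m) (hθ : m ≤ ‖θ‖) {T τ : Finset J} (hτ : τ ⊆ T)
    (hq : 1 / 2 < qF τ θ) (hd : dist θ θ' < m * (1 / 2) ^ (T.card + 3)) : θ' ∈ Oset τ := by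
  apply mem_Oset_of_gapF
  have h1 := (gapF_lip τ).dist_le_mul θ θ'
  rw [Real.dist_eq] at h1
  simp only [NNReal.coe_one, one_mul] at h1
  have h2 : m * (1 / 2) ^ (T.card + 3) ≤ gapF τ θ := by
    have hp : 0 < ‖θ‖ * (1 / 2 : ℝ) ^ (τ.card + 2) := by
      have : 0 < ‖θ‖ := by linarith
      positivity
    unfold qF at hq
    rw [lt_div_iff₀ hp] at hq
    have h3 : (1 / 2 : ℝ) ^ (T.card + 3) ≤ (1 / 2 : ℝ) ^ (τ.card + 3) :=
      pow_le_pow_of_le_one (by norm_num) (by norm_num)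
        (by have := Finset.card_le_card hτ; omega)
    have h4 : m * (1 / 2 : ℝ) ^ (T.card + 3) ≤ ‖θ‖ * (1 / 2 : ℝ) ^ (τ.card + 3) := by gcongr
    have h5 : ‖θ‖ * (1 / 2 : ℝ) ^ (τ.card + 3) = 1 / 2 * (‖θ‖ * (1 / 2 : ℝ) ^ (τ.card + 2)) := by
      ring
    linarith
  have := abs_le.1 h1
  linarith

theorem ev_x (hU : IsGoodCovering U) {F : Finset J → M → ℝ → M} {K : Finset J → ℝ}
    (hF : Contr U F K) : ∃ B Ka : ℝ, 1 ≤ B ∧ 0 ≤ Ka ∧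
    ∀ᶠ pp : (Cyl U L × unitInterval) × (Cyl U L × unitInterval) in 𝓝 (p₀, p₀),
      dist (phiF hF L pp.1).1.2.1 (phiF hF L pp.2).1.2.1 ≤
        B * (dist pp.1.1.1.2.1 pp.2.1.1.2.1 + Ka * dist pp.1 pp.2) ∧
      ((∃ τ, aF L pp.1.1.1.1 pp.1.1.1.2.2 pp.1.2 τ = 1 ∨
        aF L pp.2.1.1.1 pp.2.1.1.2.2 pp.2.2 τ = 1) →
        dist (phiF hF L pp.1).1.2.1 (phiF hF L pp.2).1.2.1 ≤ B * (Ka * dist pp.1 pp.2)) := by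
  obtain ⟨T, hT⟩ := ev_T p₀ hU
  obtain ⟨Ka, hKa, hea⟩ := ev_a p₀ T
  set A : ℝ := 1 + ∑ τ ∈ T.powerset, |K τ| with hA
  have hA1 : 1 ≤ A := by
    have : 0 ≤ ∑ τ ∈ T.powerset, |K τ| := Finset.sum_nonneg fun _ _ => abs_nonneg _
    linarith
  have hKA : ∀ τ, τ ⊆ T → K τ ≤ A := fun τ hτ => by
    have := Finset.single_le_sum (f := fun τ => |K τ|) (fun _ _ => abs_nonneg _)
      (Finset.mem_powerset.2 hτ)
    have h2 := le_abs_self (K τ)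
    linarith
  refine ⟨(2 * A) ^ T.card, Ka, one_le_pow₀ (by linarith), hKa, ?_⟩
  set m := ‖p₀.1.1.1‖ / 2 with hm
  have hn := nerve_norm_pos p₀.1.2.1
  have hm0 : 0 < m := by positivity
  have hd : Continuous fun pp : (Cyl U L × unitInterval) × (Cyl U L × unitInterval) =>
    dist pp.1 pp.2 := continuous_dist
  have e1 : ∀ᶠ pp : (Cyl U L × unitInterval) × (Cyl U L × unitInterval) in 𝓝 (p₀, p₀),
      Ka * dist pp.1 pp.2 < 1 :=
    (continuous_const.mul hd).continuousAt.eventually_lt continuousAt_const (by simp)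
  have e2 : ∀ᶠ pp : (Cyl U L × unitInterval) × (Cyl U L × unitInterval) in 𝓝 (p₀, p₀),
      dist pp.1 pp.2 < m * (1 / 2) ^ (T.card + 3) :=
    hd.continuousAt.eventually_lt continuousAt_const (by simp only [dist_self]; positivity)
  have e3 : ∀ᶠ p : Cyl U L × unitInterval in 𝓝 p₀, m < ‖p.1.1.1‖ :=
    continuousAt_const.eventually_lt (ll_theta p₀).continuousAt.norm (by rw [hm]; linarith)
  have e4 : ∀ᶠ pp : (Cyl U L × unitInterval) × (Cyl U L × unitInterval) in 𝓝 (p₀, p₀),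
      (m < ‖pp.1.1.1.1‖ ∧ ∀ j, pp.1.1.1.1 j ≠ 0 → j ∈ T) ∧
      (m < ‖pp.2.1.1.1‖ ∧ ∀ j, pp.2.1.1.1 j ≠ 0 → j ∈ T) := by
    rw [nhds_prod_eq]
    exact (e3.and hT).prod_mk (e3.and hT)
  filter_upwards [e1, e2, e4, hea] with pp h1 h2 h4 ha
  obtain ⟨p, p'⟩ := pp
  obtain ⟨⟨hmp, hTp⟩, ⟨hmp', hTp'⟩⟩ := h4
  simp only at h1 h2 hmp hmp' hTp hTp' ha ⊢
  have hN := p.1.2.1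
  have hN' := p'.1.2.1
  have hs : ∀ τ, 0 < aF L p.1.1.1 p.1.1.2.2 p.2 τ → τ ⊆ T := fun τ => aF_card hN hTp
  have hs' : ∀ τ, 0 < aF L p'.1.1.1 p'.1.1.2.2 p'.2 τ → τ ⊆ T := fun τ => aF_card hN' hTp'
  have hdd : dist p.1.1.1 p'.1.1.1 ≤ dist p p' := by
    have := ((Cyl.lip_theta U L).comp
      (LipschitzWith.prod_fst (α := Cyl U L) (β := unitInterval))).dist_le_mul p p'
    simpa using this
  have key := compo_dist hF (aF_nested L p.1.1.1 p.1.1.2.2 p.2)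
    (aF_nested L p'.1.1.1 p'.1.1.2.2 p'.2) (aF_nonneg _ _ _ _) (aF_nonneg _ _ _ _)
    hA1 (e := Ka * dist p p') (by positivity) h1 (fun τ h => hKA τ (hs τ h))
    (fun τ h => hKA τ (hs' τ h))
    (by
      intro τ
      by_cases h : τ ⊆ T
      · exact ha τ (Finset.mem_powerset.2 h)
      · have k1 : aF L p.1.1.1 p.1.1.2.2 p.2 τ = 0 :=
          le_antisymm (not_lt.1 fun q => h (hs τ q)) (aF_nonneg _ _ _ _ _)
        have k2 : aF L p'.1.1.1 p'.1.1.2.2 p'.2 τ = 0 :=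
          le_antisymm (not_lt.1 fun q => h (hs' τ q)) (aF_nonneg _ _ _ _ _)
        rw [k1, k2]
        simp only [sub_zero, abs_zero]
        positivity)
    (by
      intro τ τ' h h' hc
      have k1 := qcross hm0 hmp.le (hs τ h) (of_aF h).1 (hdd.trans_lt h2)
      have k2 := mem_Oset_of_gapF (gapF_of_qF (by linarith [(of_aF h').1] : 0 < qF τ' p'.1.1.1))
      exact (Finset.eq_of_subset_of_card_le (Oset_nested k1 k2 hc.ge) hc.le).symm)
    T.card p.1.1.2.1 p'.1.1.2.1 (inv_aF hN p.1.2.2.2 _ _ _) (inv_aF hN' p'.1.2.2.2 _ _ _)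
  have x1 : (phiF hF L p).1.2.1 = compo F (aF L p.1.1.1 p.1.1.2.2 p.2) T.card p.1.1.2.1 :=
    xF_eq F hN _ _ _ hTp
  have x2 : (phiF hF L p').1.2.1 = compo F (aF L p'.1.1.1 p'.1.1.2.2 p'.2) T.card p'.1.1.2.1 :=
    xF_eq F hN' _ _ _ hTp'
  rw [x1, x2]
  refine ⟨key.1, ?_⟩
  rintro ⟨τ, h⟩
  refine key.2 ⟨τ, ?_, h⟩
  rcases h with h | h
  · exact Finset.card_le_card (hs τ (by rw [h]; exact one_pos))
  · exact Finset.card_le_card (hs' τ (by rw [h]; exact one_pos))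

theorem exists_aF_one (hL : 0 < L) (p : Cyl U L × unitInterval) (ht : L / 2 < p.1.1.2.2)
    (hu : uB p.2 = 1) : ∃ τ, aF L p.1.1.1 p.1.1.2.2 p.2 τ = 1 := by
  obtain ⟨τ, hτ⟩ := exists_qF p.1.2.1
  refine ⟨τ, ?_⟩
  unfold aF
  have : 2 ≤ 4 * p.1.1.2.2 / L := by
    rw [le_div_iff₀ hL]; linarith
  rw [hu, clampU_of_one_le (by linarith), clampU_of_one_le (by linarith)]
  norm_num

theorem uC_of_uB {s : ℝ} (h : uB s ≠ 1) : uC s = 0 := by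
  apply clampU_of_nonpos
  by_contra hh
  exact h (clampU_of_one_le (by linarith))

theorem phi_ll (hL : 0 < L) (hU : IsGoodCovering U) {F : Finset J → M → ℝ → M}
    {K : Finset J → ℝ} (hF : Contr U F K) : LLAt (phiF hF L) p₀ := by
  obtain ⟨K1, hK1, he1⟩ := (ll_th p₀ hU).exists_ball
  obtain ⟨K2, hK2, he2⟩ := (ll_t' p₀).exists_ball
  obtain ⟨B, Ka, hB, hKa, hex⟩ := ev_x p₀ hU hF
  have hmin : ∀ p p' : Cyl U L × unitInterval,
      0 ≤ min (L - (phiF hF L p).1.2.2) (L - (phiF hF L p').1.2.2) ∧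
      min (L - (phiF hF L p).1.2.2) (L - (phiF hF L p').1.2.2) ≤ L := fun p p' =>
    ⟨le_min (by linarith [(phiF hF L p).2.2.1.2]) (by linarith [(phiF hF L p').2.2.1.2]),
      (min_le_left _ _).trans (by linarith [(phiF hF L p).2.2.1.1])⟩
  have final : ∀ K3 : ℝ, (∀ᶠ pp : (Cyl U L × unitInterval) × (Cyl U L × unitInterval) in
      𝓝 (p₀, p₀), min (L - (phiF hF L pp.1).1.2.2) (L - (phiF hF L pp.2).1.2.2) *
        min 2 (dist (phiF hF L pp.1).1.2.1 (phiF hF L pp.2).1.2.1) ≤ K3 * dist pp.1 pp.2) →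
      LLAt (phiF hF L) p₀ := by
    intro K3 h3
    apply LLAt.of_eventually (K1 + K2 + K3)
    filter_upwards [he1, he2, h3] with pp h1 h2 h3
    rw [Cyl.dist_def]
    rw [Real.dist_eq] at h2
    have h1' : dist (phiF hF L pp.1).1.1 (phiF hF L pp.2).1.1 ≤ K1 * dist pp.1 pp.2 := h1
    have h2' : |(phiF hF L pp.1).1.2.2 - (phiF hF L pp.2).1.2.2| ≤ K2 * dist pp.1 pp.2 := h2
    linarith
  have hfar : ∀ (p p' : Cyl U L × unitInterval) (D : ℝ),
      dist (phiF hF L p).1.2.1 (phiF hF L p').1.2.1 ≤ D →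
      min (L - (phiF hF L p).1.2.2) (L - (phiF hF L p').1.2.2) *
        min 2 (dist (phiF hF L p).1.2.1 (phiF hF L p').1.2.1) ≤ L * D := fun p p' D h =>
    mul_le_mul (hmin p p').2 ((min_le_right _ _).trans h) (le_min (by norm_num) dist_nonneg) hL.le
  rcases lt_or_eq_of_le p₀.1.2.2.1.2 with ht | ht
  · have hx : LLAt (fun p : Cyl U L × unitInterval => p.1.1.2.1) p₀ :=
      LLAt.comp (g := fun z : Cyl U L => z.1.2.1)
        (f := fun p : Cyl U L × unitInterval => p.1) (Cyl.ll_x p₀.1 ht) (LLAt.of_lipschitz LipschitzWith.prod_fst p₀)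
    obtain ⟨Kx, hKx, hx⟩ := hx.exists_ball
    apply final (L * (B * (Kx + Ka)))
    filter_upwards [hex, hx] with pp h1 h2
    refine (hfar pp.1 pp.2 _ h1.1).trans ?_
    rw [mul_assoc, mul_assoc]
    refine mul_le_mul_of_nonneg_left (mul_le_mul_of_nonneg_left ?_ (by linarith)) hL.le
    linarith
  · apply final (L * (B * Ka) + B)
    have ev : ∀ᶠ p : Cyl U L × unitInterval in 𝓝 p₀, L / 2 < p.1.1.2.2 :=
      continuousAt_const.eventually_lt (ll_t p₀).continuousAt (by rw [ht]; linarith)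
    have ev2 : ∀ᶠ pp : (Cyl U L × unitInterval) × (Cyl U L × unitInterval) in
        𝓝 (p₀, p₀), L / 2 < pp.1.1.1.2.2 ∧ L / 2 < pp.2.1.1.2.2 := by
      rw [nhds_prod_eq]
      exact ev.prod_mk ev
    filter_upwards [hex, ev2] with pp h1 h2
    obtain ⟨p, p'⟩ := pp
    simp only at h1 h2 ⊢
    have hd0 := dist_nonneg (x := p) (y := p')
    have hLB : 0 ≤ L * (B * Ka) := by positivity
    by_cases hu : uB p.2 = 1 ∨ uB p'.2 = 1
    · have hτ : ∃ τ, aF L p.1.1.1 p.1.1.2.2 p.2 τ = 1 ∨ aF L p'.1.1.1 p'.1.1.2.2 p'.2 τ = 1 := by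
        rcases hu with hu | hu
        · obtain ⟨τ, h⟩ := exists_aF_one hL p h2.1 hu
          exact ⟨τ, Or.inl h⟩
        · obtain ⟨τ, h⟩ := exists_aF_one hL p' h2.2 hu
          exact ⟨τ, Or.inr h⟩
      refine (hfar p p' _ (h1.2 hτ)).trans ?_
      nlinarith
    · push Not at hu
      have t1 : (phiF hF L p).1.2.2 = p.1.1.2.2 := by
        simp [phiF, uC_of_uB hu.1]
      have t2 : (phiF hF L p').1.2.2 = p'.1.1.2.2 := by
        simp [phiF, uC_of_uB hu.2]
      have hm := hmin p p'
      rw [t1, t2] at hm ⊢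
      have hE : 0 ≤ Ka * dist p p' := by positivity
      have hmm : min 2 (dist (phiF hF L p).1.2.1 (phiF hF L p').1.2.1) ≤
          B * min 2 (dist p.1.1.2.1 p'.1.1.2.1) + B * (Ka * dist p p') := by
        rcases le_total 2 (dist p.1.1.2.1 p'.1.1.2.1) with q | q
        · rw [min_eq_left q]
          refine (min_le_left _ _).trans ?_
          nlinarith
        · rw [min_eq_right q]
          refine (min_le_right _ _).trans ?_
          linarith [h1.1]
      have hcyl : min (L - p.1.1.2.2) (L - p'.1.1.2.2) * min 2 (dist p.1.1.2.1 p'.1.1.2.1) ≤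
          dist p p' := by
        have h5 : dist p.1 p'.1 ≤ dist p p' := by rw [Prod.dist_eq]; exact le_max_left _ _
        have h6 := Cyl.dist_def p.1 p'.1
        have := dist_nonneg (x := p.1.1.1) (y := p'.1.1.1)
        have := abs_nonneg (p.1.1.2.2 - p'.1.1.2.2)
        linarith
      calc _ ≤ min (L - p.1.1.2.2) (L - p'.1.1.2.2) *
            (B * min 2 (dist p.1.1.2.1 p'.1.1.2.1) + B * (Ka * dist p p')) :=
            mul_le_mul_of_nonneg_left hmm hm.1
        _ = B * (min (L - p.1.1.2.2) (L - p'.1.1.2.2) * min 2 (dist p.1.1.2.1 p'.1.1.2.1)) +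
            min (L - p.1.1.2.2) (L - p'.1.1.2.2) * (B * (Ka * dist p p')) := by ring
        _ ≤ B * dist p p' + L * (B * (Ka * dist p p')) := by
            gcongr
            exact hm.2
        _ = _ := by ring
end ll
end


section
variable {M J : Type*} [MetricSpace M]

theorem phiF_eq_self {F : Finset J → M → ℝ → M} {K : Finset J → ℝ} {U : J → Set M}
    (hF : Contr U F K) (L : ℝ) (p : Cyl U L × unitInterval)
    (h : (p.2 : ℝ) = 0 ∨ p.1.1.2.2 = 0) : (phiF hF L p).1 = p.1.1 := by
  have hc : ∀ τ, cF L p.1.1.1 p.1.1.2.2 p.2 τ = 0 := by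
    intro τ
    unfold cF uA
    rcases h with h | h
    · rw [h, clampU_of_nonpos (r := 3 * 0) (by norm_num)]; ring
    · rw [h, clampU_of_nonpos (r := 4 * 0 / L) (by norm_num)]; ring
  have ha : ∀ τ, ¬ 0 < aF L p.1.1.1 p.1.1.2.2 p.2 τ := by
    intro τ h0
    have := (of_aF h0).2
    rw [hc] at this
    norm_num at this
  have ht : (1 - uC p.2) * p.1.1.2.2 = p.1.1.2.2 := by
    rcases h with h | h
    · unfold uC
      rw [h, clampU_of_nonpos (by norm_num)]; ring
    · rw [h]; ring
  have hx : xF F L p.1.1.1 p.1.1.2.1 p.1.1.2.2 p.2 = p.1.1.2.1 := compo_zero _ _ ha _ _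
  exact Prod.ext (thF_id p.1.2.1 hc) (Prod.ext hx ht)

open Classical in
/-- good representative of a point of the cylinder -/
noncomputable def nrm {U : J → Set M} {L : ℝ} (z : LInf J × M × ℝ) (h : InCylInf U L z) :
    Cyl U L :=
  if hx : ∀ j, z.1 j ≠ 0 → z.2.1 ∈ U j then ⟨z, h.1, h.2.1, hx⟩
  else ⟨(z.1, h.1.2.2.2.some, z.2.2), h.1, h.2.1, fun j hj => by
    have := h.1.2.2.2.some_mem
    simp only [mem_iInter] at this
    exact this j hj⟩

theorem nrm_spec {U : J → Set M} {L : ℝ} (z : LInf J × M × ℝ) (h : InCylInf U L z) :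
    (nrm z h).1.1 = z.1 ∧ (nrm z h).1.2.2 = z.2.2 ∧ ((nrm z h).1.2.1 = z.2.1 ∨ z.2.2 = L) := by
  classical
  by_cases hx : ∀ j, z.1 j ≠ 0 → z.2.1 ∈ U j
  · have e : nrm z h = ⟨z, h.1, h.2.1, hx⟩ := dif_pos hx
    rw [e]
    exact ⟨rfl, rfl, Or.inl rfl⟩
  · have e : (nrm z h).1 = (z.1, h.1.2.2.2.some, z.2.2) := congrArg Subtype.val (dif_neg hx)
    rw [e]
    refine ⟨rfl, rfl, Or.inr ?_⟩
    by_contra ht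
    obtain ⟨s, hs, _, h3⟩ := h.2.2
    apply hx
    intro j hj
    have := h3.resolve_left ht
    simp only [mem_iInter] at this
    exact this j (hs j hj)

theorem rawD_congr {L : ℝ} {z z' w w' : LInf J × M × ℝ} (hz : z.2.2 ≤ L) (hw : w.2.2 ≤ L)
    (h : z'.1 = z.1 ∧ z'.2.2 = z.2.2 ∧ (z'.2.1 = z.2.1 ∨ z.2.2 = L))
    (h' : w'.1 = w.1 ∧ w'.2.2 = w.2.2 ∧ (w'.2.1 = w.2.1 ∨ w.2.2 = L)) :
    rawD L z' w' = rawD L z w := by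
  unfold rawD conD
  rw [h.1, h.2.1, h'.1, h'.2.1]
  congr 2
  rcases h.2.2 with h1 | h1
  · rcases h'.2.2 with h2 | h2
    · rw [h1, h2]
    · rw [h2, sub_self, min_eq_right (by linarith), zero_mul, zero_mul]
  · rw [h1, sub_self, min_eq_left (by linarith), zero_mul, zero_mul]

theorem rawD_self (L : ℝ) (z : LInf J × M × ℝ) : rawD L z z = 0 := by simp [rawD, conD]

theorem rawD_nrm {U : J → Set M} {L : ℝ} {z w : LInf J × M × ℝ} (h : InCylInf U L z)
    (h' : InCylInf U L w) : rawD L (nrm z h).1 (nrm w h').1 = rawD L z w :=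
  rawD_congr h.2.1.2 h'.2.1.2 (nrm_spec z h) (nrm_spec w h')

theorem cylDist_nrm {U : J → Set M} {L : ℝ} {z : LInf J × M × ℝ} (h : InCylInf U L z) :
    cylDistInf L (nrm z h).1 z = 0 := by
  refine le_antisymm ?_ (Real.sqrt_nonneg _)
  have h1 := cylDistInf_le (z := (nrm z h).1) (w := z) (L := L) (nrm z h).2.2.1.2 h.2.1.2
  rw [rawD_congr h.2.1.2 h.2.1.2 (nrm_spec z h) ⟨rfl, rfl, Or.inl rfl⟩, rawD_self] at h1
  linarith

theorem main_aux (U : J → Set M) (hU : IsGoodCovering U) (L : ℝ) (hL : 0 < L) :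
    ∃ Φ : (LInf J × M × ℝ) × unitInterval → LInf J × M × ℝ,
      (∀ z, InCylInf U L z → ∀ t : unitInterval, InCylInf U L (Φ (z, t))) ∧
      (∀ z, InCylInf U L z → ∀ t₀ : unitInterval, ∃ (K : NNReal) (ε : ℝ), 0 < ε ∧
        ∀ w w', InCylInf U L w → InCylInf U L w' → ∀ s s' : unitInterval,
          cylDistInf L z w < ε → cylDistInf L z w' < ε →
          dist t₀ s < ε → dist t₀ s' < ε →
          cylDistInf L (Φ (w, s)) (Φ (w', s')) ≤
            K * max (cylDistInf L w w') (dist s s')) ∧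
      (∀ z, InCylInf U L z → cylDistInf L (Φ (z, 0)) z = 0) ∧
      (∀ z, InCylInf U L z → InDZeroInf U (Φ (z, 1))) ∧
      (∀ z, InCylInf U L z → InDZeroInf U z →
        ∀ t : unitInterval, cylDistInf L (Φ (z, t)) z = 0) := by
  classical
  obtain ⟨F, K, hF⟩ := exists_contr U hU
  set Φ : (LInf J × M × ℝ) × unitInterval → LInf J × M × ℝ := fun p =>
    if h : InCylInf U L p.1 then (phiF hF L (nrm p.1 h, p.2)).1 else p.1 with hΦ
  have hval : ∀ z (h : InCylInf U L z) t, Φ (z, t) = (phiF hF L (nrm z h, t)).1 := by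
    intro z h t
    simp only [hΦ]
    rw [dif_pos h]
  refine ⟨Φ, ?_, ?_, ?_, ?_, ?_⟩
  · intro z h t
    rw [hval z h]
    obtain ⟨h1, h2, h3⟩ := (phiF hF L (nrm z h, t)).2
    have hm : (phiF hF L (nrm z h, t)).1.2.1 ∈ ⋂ j ∈ h1.2.1.toFinset, U j := by
      simp only [mem_iInter, Finite.mem_toFinset, Function.mem_support]
      exact h3
    exact ⟨h1, h2, h1.2.1.toFinset, by simp, ⟨_, hm⟩, Or.inr hm⟩
  · intro z h t₀
    obtain ⟨C, V, hV, hlip⟩ := phi_ll (nrm z h, t₀) hL hU hF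
    obtain ⟨ε, hε, hball⟩ := Metric.mem_nhds_iff.1 hV
    refine ⟨16 * C, ε / 4, by linarith, ?_⟩
    have hin : ∀ w (hw : InCylInf U L w) (s : unitInterval), cylDistInf L z w < ε / 4 →
        dist t₀ s < ε / 4 → (nrm w hw, s) ∈ V := by
      intro w hw s h1 h2
      apply hball
      rw [mem_ball', Prod.dist_eq]
      refine max_lt ?_ (lt_trans h2 (by linarith))
      change rawD L (nrm z h).1 (nrm w hw).1 < ε
      rw [rawD_nrm]
      have := rawD_le (z := z) (w := w) h.2.1.2 hw.2.1.2
      linarith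
    intro w w' hw hw' s s' h1 h2 h3 h4
    rw [hval w hw, hval w' hw']
    have k1 := hlip.dist_le_mul _ (hin w hw s h1 h3) _ (hin w' hw' s' h2 h4)
    rw [Prod.dist_eq] at k1
    have k2 : rawD L (phiF hF L (nrm w hw, s)).1 (phiF hF L (nrm w' hw', s')).1 ≤
      C * max (rawD L (nrm w hw).1 (nrm w' hw').1) (dist s s') := k1
    rw [rawD_nrm] at k2
    have k3 := rawD_le (z := w) (w := w') hw.2.1.2 hw'.2.1.2
    have k4 := cylDistInf_le (phiF hF L (nrm w hw, s)).2.2.1.2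
      (phiF hF L (nrm w' hw', s')).2.2.1.2
    have k5 : max (rawD L w w') (dist s s') ≤ 4 * max (cylDistInf L w w') (dist s s') := by
      apply max_le
      · linarith [le_max_left (cylDistInf L w w') (dist s s')]
      · linarith [le_max_right (cylDistInf L w w') (dist s s'), dist_nonneg (x := s) (y := s')]
    have k6 := mul_le_mul_of_nonneg_left k5 C.2
    push_cast
    change (C : ℝ) * _ ≤ (C : ℝ) * _ at k6
    linarith
  · intro z h
    rw [hval z h, phiF_eq_self hF L _ (Or.inl rfl)]
    exact cylDist_nrm h
  · intro z h
    rw [hval z h]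
    obtain ⟨h1, h2, h3⟩ := (phiF hF L (nrm z h, 1)).2
    refine ⟨h1, ?_, ?_⟩
    · change (1 - uC ((1 : unitInterval) : ℝ)) * _ = 0
      unfold uC
      rw [clampU_of_one_le (by simp; norm_num)]
      ring
    · simp only [mem_iInter, Function.mem_support]
      exact h3
  · intro z h h0 t
    rw [hval z h, phiF_eq_self hF L _ (Or.inr ((nrm_spec z h).2.1.trans h0.2.1))]
    exact cylDist_nrm h

end


end Helpers

/-- For a σ-compact metric space with a good covering (countable index
set) and `L > 6`, there is a *locally Lipschitz* strong deformation retraction `Φ` of the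
mapping cylinder `M(p)` onto `D(𝒰) × {0}`.  Everything is expressed on representatives,
with equality in `M(p)` expressed as vanishing of `cylDistInf`; local Lipschitz continuity
means: around every point of `M(p) × [0,1]` there is a ball on which `Φ` satisfies a
Lipschitz estimate. -/
theorem cylinder_locLipSDR_onto_DZero {M : Type*} [MetricSpace M] [SigmaCompactSpace M]
    {J : Type*} [Countable J] (U : J → Set M) (hU : IsGoodCovering U)
    (L : ℝ) (hL : 6 < L) :
    ∃ Φ : ((lp (fun _ : J => ℝ) ⊤) × M × ℝ) × unitInterval →
        (lp (fun _ : J => ℝ) ⊤) × M × ℝ,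
      (∀ z, InCylInf U L z → ∀ t : unitInterval, InCylInf U L (Φ (z, t))) ∧
      (∀ z, InCylInf U L z → ∀ t₀ : unitInterval, ∃ (K : NNReal) (ε : ℝ), 0 < ε ∧
        ∀ w w', InCylInf U L w → InCylInf U L w' → ∀ s s' : unitInterval,
          cylDistInf L z w < ε → cylDistInf L z w' < ε →
          dist t₀ s < ε → dist t₀ s' < ε →
          cylDistInf L (Φ (w, s)) (Φ (w', s')) ≤
            K * max (cylDistInf L w w') (dist s s')) ∧
      (∀ z, InCylInf U L z → cylDistInf L (Φ (z, 0)) z = 0) ∧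
      (∀ z, InCylInf U L z → InDZeroInf U (Φ (z, 1))) ∧
      (∀ z, InCylInf U L z → InDZeroInf U z →
        ∀ t : unitInterval, cylDistInf L (Φ (z, t)) z = 0) := by
  exact main_aux U hU L (by linarith)
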